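/- arXiv:2407.20217 — 2 statements merged into one kernel-verified Lean document; each statement's English description precedes it below -/
import Mathlib

section
/- (a) For k ≥ 1, a graph G ∈ G_{n,n+k} minimizes d_2 over G_{n,n+k} if and only if G is a balanced weak subdivision of some D ∈ D_k. (b) If G is an imbalanced weak subdivision of some D ∈ D_k, then choosing a pair of chains whose lengths differ by at least 2 and moving one edge from the longer to the shorter chain strictly decreases d_2. -/
open Classical Finset

noncomputable section

/-- A finite multigraph: edges carry two (possibly equal) endpoints. -/
structure Multigraph where
  V : Type
  E : Type
  [fintV : Fintype V]
  [fintE : Fintype E]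
  src : E → V
  tgt : E → V

attribute [instance] Multigraph.fintV Multigraph.fintE

namespace Multigraph

variable (G : Multigraph)

/-- Number of vertices. -/
def nV : ℕ := Fintype.card G.V

/-- Number of edges (with multiplicity). -/
def nE : ℕ := Fintype.card G.E

/-- One step along an edge belonging to the edge set `S`. -/
def stepOn (S : Finset G.E) (u v : G.V) : Prop :=
  ∃ e ∈ S, (G.src e = u ∧ G.tgt e = v) ∨ (G.src e = v ∧ G.tgt e = u)

/-- The spanning subgraph with edge set `S` is connected. -/
def ConnOn (S : Finset G.E) : Prop :=
  ∀ u v : G.V, Relation.ReflTransGen (G.stepOn S) u v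

/-- `G` is connected. -/
def Connected : Prop := G.ConnOn Finset.univ

/-- The edge set `F` disconnects `G` (i.e. is a disconnection). -/
def Disconnects (F : Finset G.E) : Prop := ¬ G.ConnOn (Finset.univ \ F)

/-- `d i G`: the number of `i`-disconnections of `G`. -/
def d (i : ℕ) : ℕ :=
  ((Finset.univ : Finset (Finset G.E)).filter fun F => F.card = i ∧ G.Disconnects F).card

/-- The all-terminal reliability `R(G,p)`: each edge is independently retained with
probability `p`; this is the probability that the retained spanning subgraph is connected. -/
def rel (p : ℝ) : ℝ :=
  ∑ S : Finset G.E, if G.ConnOn S then p ^ S.card * (1 - p) ^ (G.nE - S.card) else 0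

/-- `e` is a bridge. -/
def IsBridge (e : G.E) : Prop := G.Disconnects {e}

def Bridgeless : Prop := ∀ e : G.E, ¬ G.IsBridge e

/-- The number of spanning trees of `G` (connected spanning subgraphs with `nV - 1` edges). -/
def treeCount : ℕ :=
  ((Finset.univ : Finset (Finset G.E)).filter fun S => S.card + 1 = G.nV ∧ G.ConnOn S).card

/-- The edge-connectivity: the least size of a disconnecting set of edges. -/
def edgeConnectivity : ℕ :=
  sInf {i : ℕ | ∃ F : Finset G.E, F.card = i ∧ G.Disconnects F}

/-- Degree of a vertex (a loop counts twice). -/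
def deg (v : G.V) : ℕ :=
  (Finset.univ.filter fun e => G.src e = v).card +
    (Finset.univ.filter fun e => G.tgt e = v).card

/-- The edges crossing the vertex set `A`. -/
def cutEdges (A : Finset G.V) : Finset G.E :=
  Finset.univ.filter fun e =>
    (G.src e ∈ A ∧ G.tgt e ∉ A) ∨ (G.src e ∉ A ∧ G.tgt e ∈ A)

/-- `F` is a cut: the set of edges crossing a nontrivial bipartition of the vertices. -/
def IsCut (F : Finset G.E) : Prop :=
  ∃ A : Finset G.V, A.Nonempty ∧ A ≠ Finset.univ ∧ F = G.cutEdges A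

/-- `F` is a bond: a minimal cut. -/
def IsBond (F : Finset G.E) : Prop :=
  G.IsCut F ∧ ∀ F' ⊆ F, G.IsCut F' → F' = F

/-- Number of `s`-bonds of `G`. -/
def bondCount (s : ℕ) : ℕ :=
  ((Finset.univ : Finset (Finset G.E)).filter fun F => F.card = s ∧ G.IsBond F).card

/-- Adjacency of vertices. -/
def Adj (u v : G.V) : Prop :=
  ∃ e : G.E, (G.src e = u ∧ G.tgt e = v) ∨ (G.src e = v ∧ G.tgt e = u)

/-- `G` is simple: no loops and no parallel edges. -/
def IsSimple : Prop :=
  (∀ e : G.E, G.src e ≠ G.tgt e) ∧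
    ∀ e f : G.E,
      ((G.src e = G.src f ∧ G.tgt e = G.tgt f) ∨ (G.src e = G.tgt f ∧ G.tgt e = G.src f)) →
        e = f

end Multigraph

/-- `G ∈ 𝒢_{n,m}`: connected with `n` vertices and `m` edges. -/
def memG (G : Multigraph) (n m : ℕ) : Prop :=
  G.nV = n ∧ G.nE = m ∧ G.Connected

/-- Isomorphism of multigraphs. -/
structure MGIso (G H : Multigraph) where
  vMap : G.V ≃ H.V
  eMap : G.E ≃ H.E
  ends_eq : ∀ e : G.E,
    (H.src (eMap e) = vMap (G.src e) ∧ H.tgt (eMap e) = vMap (G.tgt e)) ∨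
    (H.src (eMap e) = vMap (G.tgt e) ∧ H.tgt (eMap e) = vMap (G.src e))

def IsIso (G H : Multigraph) : Prop := Nonempty (MGIso G H)

/-- `G` is `p`-optimal in `𝒢_{n,m}`. -/
def pOptimal (G : Multigraph) (n m : ℕ) (p : ℝ) : Prop :=
  memG G n m ∧ ∀ H : Multigraph, memG H n m → H.rel p ≤ G.rel p

/-- `G` is uniquely optimal in `𝒢_{n,m}`: strictly more reliable than every
non-isomorphic member, for every `p ∈ (0,1)`. -/
def UniquelyOptimal (G : Multigraph) (n m : ℕ) : Prop :=
  memG G n m ∧ ∀ H : Multigraph, memG H n m → ¬ IsIso G H →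
    ∀ p : ℝ, 0 < p → p < 1 → H.rel p < G.rel p

noncomputable instance quotFintype {α : Type} [Fintype α] {r : α → α → Prop} :
    Fintype (Quot r) :=
  letI := Classical.decEq (Quot r)
  Fintype.ofSurjective (Quot.mk r) fun q => Quot.exists_rep q

/-- Identification of the endpoints of zero-weight edges. -/
def zeroRel (D : Multigraph) (w : D.E → ℕ) : D.V → D.V → Prop :=
  fun u v => ∃ e : D.E, w e = 0 ∧ D.src e = u ∧ D.tgt e = v

/-- The `j`-th node along the chain replacing the edge `e` (whose chain has `w e` edges). -/
def chainNode (D : Multigraph) (w : D.E → ℕ) (e : D.E) (j : ℕ) :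
    Quot (zeroRel D w) ⊕ (Σ f : D.E, Fin (w f - 1)) :=
  if h : 0 < j ∧ j < w e then Sum.inr ⟨e, ⟨j - 1, by omega⟩⟩
  else if j = 0 then Sum.inl (Quot.mk _ (D.src e))
  else Sum.inl (Quot.mk _ (D.tgt e))

/-- The weak subdivision of `D` determined by the chain lengths `w`: each edge `e` is
replaced by a chain with `w e` edges; zero-weight edges are contracted. -/
def subdivide (D : Multigraph) (w : D.E → ℕ) : Multigraph where
  V := Quot (zeroRel D w) ⊕ (Σ f : D.E, Fin (w f - 1))
  E := Σ f : D.E, Fin (w f)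
  src f := chainNode D w f.1 f.2.val
  tgt f := chainNode D w f.1 (f.2.val + 1)

/-- The zero-weight edges contain no cycle (no "zero cycle"): they form a forest. -/
def ZeroAcyclic (D : Multigraph) (w : D.E → ℕ) : Prop :=
  Fintype.card (Quot (zeroRel D w)) +
      (Finset.univ.filter fun e : D.E => w e = 0).card = Fintype.card D.V

/-- `G` is a weak subdivision of `D` with chain lengths `w`. -/
def IsWeakSubdivision (G D : Multigraph) (w : D.E → ℕ) : Prop :=
  ZeroAcyclic D w ∧ IsIso G (subdivide D w)

/-- `D` is a weak distillation of `G`. -/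
def IsWeakDistillation (D G : Multigraph) : Prop :=
  ∃ w : D.E → ℕ, IsWeakSubdivision G D w

/-- The chain lengths differ pairwise by at most one. -/
def BalancedWeights {E : Type} (w : E → ℕ) : Prop := ∀ e f : E, w e ≤ w f + 1

/-- `D ∈ 𝒟_k`: connected, cubic, 3-edge-connected, of exceedance `k`. -/
def memDk (k : ℕ) (D : Multigraph) : Prop :=
  D.Connected ∧ (∀ v : D.V, D.deg v = 3) ∧
    (∀ F : Finset D.E, D.Disconnects F → 3 ≤ F.card) ∧ D.nE = D.nV + k

/-- Identification of the two endpoints of the edge `e`. -/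
def contractRel (G : Multigraph) (e : G.E) : G.V → G.V → Prop :=
  fun u v => u = G.src e ∧ v = G.tgt e

/-- Contraction of the edge `e`. -/
def Multigraph.contract (G : Multigraph) (e : G.E) : Multigraph :=
  letI := Classical.decEq G.E
  { V := Quot (contractRel G e)
    E := {f : G.E // f ≠ e}
    src := fun f => Quot.mk _ (G.src f.1)
    tgt := fun f => Quot.mk _ (G.tgt f.1) }

/-- `G'` is obtained from `G` by shifting an edge: in an intermediate graph `H`
(the expansion of `G` at a vertex by the new edge `e'`), the edges `e, e'` form a
2-bond; contracting `e'` gives back `G`, while contracting `e` gives `G'`. -/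
def IsShiftOf (G G' : Multigraph) : Prop :=
  ∃ (H : Multigraph) (e e' : H.E), e ≠ e' ∧
    H.src e ≠ H.tgt e ∧ H.src e' ≠ H.tgt e' ∧
    H.IsBond {e, e'} ∧
    IsIso (H.contract e') G ∧ IsIso (H.contract e) G'

/-- Equivalence of graphs: repeated edge shifting. -/
def EquivalentGraphs (G G' : Multigraph) : Prop :=
  Relation.ReflTransGen IsShiftOf G G'

/-- `G'` is obtained from `G` by moving the (non-loop) edge `e`: contracting `e` and
expanding a new edge, identified with `e` via `φ`, at an arbitrary vertex.
Equivalently, `G/e` and `G'/φ e` agree, compatibly with the edge identification `φ`. -/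
def MovedEdge (G G' : Multigraph) (φ : G.E ≃ G'.E) (e : G.E) : Prop :=
  G.src e ≠ G.tgt e ∧ G'.src (φ e) ≠ G'.tgt (φ e) ∧
  ∃ ψ : Quot (contractRel G e) ≃ Quot (contractRel G' (φ e)),
    ∀ f : G.E, f ≠ e →
      ((ψ (Quot.mk _ (G.src f)) = Quot.mk _ (G'.src (φ f)) ∧
        ψ (Quot.mk _ (G.tgt f)) = Quot.mk _ (G'.tgt (φ f))) ∨
       (ψ (Quot.mk _ (G.src f)) = Quot.mk _ (G'.tgt (φ f)) ∧
        ψ (Quot.mk _ (G.tgt f)) = Quot.mk _ (G'.src (φ f))))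

/-- Move one edge from the chain `a` to the chain `b`. -/
def moveWeight {E : Type} (w : E → ℕ) (a b : E) : E → ℕ :=
  fun g => if g = b then w b + 1 else if g = a then w a - 1 else w g

/-- The chains of maximal length. -/
def maxChains (D : Multigraph) (w : D.E → ℕ) : Finset D.E :=
  Finset.univ.filter fun e => ∀ f : D.E, w f ≤ w e

/-- The chains of minimal length. -/
def minChains (D : Multigraph) (w : D.E → ℕ) : Finset D.E :=
  Finset.univ.filter fun e => ∀ f : D.E, w e ≤ w f

/-- Degree of `v` within the edge set `S`. -/
def degIn (D : Multigraph) (S : Finset D.E) (v : D.V) : ℕ :=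
  (S.filter fun e => D.src e = v).card + (S.filter fun e => D.tgt e = v).card

/-- `S` is a matching (pairwise non-adjacent edges). -/
def IsMatchingIn (D : Multigraph) (S : Finset D.E) : Prop := ∀ v : D.V, degIn D S v ≤ 1

/-- `S` is a path with three edges. -/
def IsPath3In (D : Multigraph) (S : Finset D.E) : Prop :=
  S.card = 3 ∧ (∀ v : D.V, degIn D S v ≤ 2) ∧
    (Finset.univ.filter fun v : D.V => degIn D S v = 1).card = 2

/-- `S` is the disjoint union of a path with three edges and a single edge. -/
def IsPath3PlusEdgeIn (D : Multigraph) (S : Finset D.E) : Prop :=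
  S.card = 4 ∧ (∀ v : D.V, degIn D S v ≤ 2) ∧
    (Finset.univ.filter fun v : D.V => degIn D S v = 1).card = 4 ∧
    ∃ e ∈ S, degIn D S (D.src e) = 2 ∧ degIn D S (D.tgt e) = 2

/-- `S` is the disjoint union of two paths with two edges each. -/
def IsTwoPlusTwoIn (D : Multigraph) (S : Finset D.E) : Prop :=
  S.card = 4 ∧ (∀ v : D.V, degIn D S v ≤ 2) ∧
    (Finset.univ.filter fun v : D.V => degIn D S v = 1).card = 4 ∧
    ∀ e ∈ S, degIn D S (D.src e) = 1 ∨ degIn D S (D.tgt e) = 1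

/-- Two edges sharing a vertex. -/
def AdjEdges (D : Multigraph) (a b : D.E) : Prop :=
  ∃ v : D.V, (D.src a = v ∨ D.tgt a = v) ∧ (D.src b = v ∨ D.tgt b = v)

/-- The number of incidences of edges of weight `c` at the vertex `u`. -/
def incCount (D : Multigraph) (w : D.E → ℕ) (u : D.V) (c : ℕ) : ℕ :=
  (Finset.univ.filter fun e : D.E => D.src e = u ∧ w e = c).card +
    (Finset.univ.filter fun e : D.E => D.tgt e = u ∧ w e = c).card

/-- The `π^v`-value of the vertex `u`: the number of incident edges of weight `q + 1`
minus the number of incident edges of weight `q - 1`. -/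
def piV (D : Multigraph) (w : D.E → ℕ) (q : ℕ) (u : D.V) : ℤ :=
  (incCount D w u (q + 1) : ℤ) -
    (if q = 0 then 0 else (incCount D w u (q - 1) : ℤ))

/-- The `π^v`-values are balanced: pairwise differences at most one. -/
def BalancedPiV (D : Multigraph) (w : D.E → ℕ) (q : ℕ) : Prop :=
  ∀ u v : D.V, piV D w q u ≤ piV D w q v + 1

/-- The standard weight `q`, where `m = 3kq + r` with `-3k/2 < r ≤ 3k/2`. -/
def stdWeight (m k : ℕ) : ℕ := (2 * m + 3 * k - 1) / (6 * k)

/-- `w` is a balanced weighting of `D` of total size `m` (the implied weak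
subdivision is the generic member of `ℬ_m(D)`). -/
def IsBalancedWeighting (D : Multigraph) (w : D.E → ℕ) (m : ℕ) : Prop :=
  (∑ e : D.E, w e) = m ∧ BalancedWeights w ∧ ZeroAcyclic D w

/-- Every 3-bond of `D` is trivial (consists of the three edges at a single vertex). -/
def OnlyTrivialThreeBonds (D : Multigraph) : Prop :=
  ∀ F : Finset D.E, D.IsBond F → F.card = 3 →
    ∃ u : D.V, F = Finset.univ.filter fun e => D.src e = u ∨ D.tgt e = u

/-- The 3-dipole: two vertices joined by three parallel edges. -/
def dipole3 : Multigraph where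
  V := Fin 2
  E := Fin 3
  src _ := 0
  tgt _ := 1

/-- The complete graph `K₄`. -/
def K4 : Multigraph where
  V := Fin 4
  E := {p : Fin 4 × Fin 4 // p.1 < p.2}
  src p := p.1.1
  tgt p := p.1.2

/-- The complete bipartite graph `K_{3,3}`. -/
def K33 : Multigraph where
  V := Fin 3 ⊕ Fin 3
  E := Fin 3 × Fin 3
  src p := Sum.inl p.1
  tgt p := Sum.inr p.2

/-- The triangular prism `Π₃`; the edges `Sum.inr i` are the rungs. -/
def prism : Multigraph where
  V := Fin 3 × Bool
  E := (Fin 3 × Bool) ⊕ Fin 3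
  src := fun e => match e with
    | Sum.inl (i, b) => (i, b)
    | Sum.inr i => (i, false)
  tgt := fun e => match e with
    | Sum.inl (i, b) => (i + 1, b)
    | Sum.inr i => (i, true)

/-- The Wagner graph (the 4-Möbius ladder): the edges `Sum.inl i` are the rails
(the 8-cycle) and the edges `Sum.inr j` are the rungs. -/
def wagner : Multigraph where
  V := Fin 8
  E := Fin 8 ⊕ Fin 4
  src := fun e => match e with
    | Sum.inl i => i
    | Sum.inr j => ⟨j.val, by omega⟩
  tgt := fun e => match e with
    | Sum.inl i => i + 1
    | Sum.inr j => ⟨j.val + 4, by omega⟩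

/-- The Petersen graph. -/
def petersen : Multigraph where
  V := Fin 5 × Bool
  E := Fin 5 ⊕ Fin 5 ⊕ Fin 5
  src := fun e => match e with
    | Sum.inl i => (i, false)
    | Sum.inr (Sum.inl i) => (i, false)
    | Sum.inr (Sum.inr i) => (i, true)
  tgt := fun e => match e with
    | Sum.inl i => (i + 1, false)
    | Sum.inr (Sum.inl i) => (i, true)
    | Sum.inr (Sum.inr i) => (i + 2, true)

/-!
Two edges of the same chain of a weak subdivision of a 3-edge-connected graph form a disconnection,
and no other two edges do, so `d₂` is the sum of `(w f).choose 2` over the chain lengths `w f`. By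
convexity this sum is least exactly when the lengths differ by at most one, and it drops when an
edge is moved from a chain to one that is shorter by at least two.

The edges of any connected graph of exceedance `k` can be coloured with `3k` colours such that any
two edges of the same colour form a disconnection: contract an edge of a disconnecting pair until
the graph is 3-edge-connected, and hence has at most `3k` edges by counting degrees. So `d₂` is at
least the same convex sum over the colour classes.

For `n ≥ 2k`, equality forces all `3k` classes to be nonempty and every disconnecting pair to lie in
one class. Then the graph is bridgeless, and contracting edges at vertices of degree two exhibits it
as a subdivision of a cubic 3-edge-connected graph whose chains are the classes. For `n ≤ 2k` the
minimum of `d₂` is zero: the minimizers are the 3-edge-connected graphs, and expanding vertices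
while keeping 3-edge-connectivity turns them into contractions of cubic ones.
-/

section Convexity

lemma cast_choose_two_add_sub_mul (q s : ℕ) :
    (s.choose 2 + (q + 1).choose 2 - q * s : ℚ) = (s - q) * (s - (q + 1)) / 2 := by
  rw [Nat.cast_choose_two, Nat.cast_choose_two]
  push_cast
  ring

/- Between consecutive integers `q` and `q + 1` the quadratic `s.choose 2` is interpolated by the
linear function `q * s - (q + 1).choose 2`, which lies below it elsewhere. -/
lemma mul_le_choose_two_add (q s : ℕ) : q * s ≤ s.choose 2 + (q + 1).choose 2 := by
  have hgap : (0 : ℚ) ≤ (s - q) * (s - (q + 1)) := by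
    rcases le_or_gt s q with h | h
    · have h' : (s : ℚ) ≤ q := by exact_mod_cast h
      nlinarith
    · have h' : (q : ℚ) + 1 ≤ s := by exact_mod_cast h
      nlinarith
  have := cast_choose_two_add_sub_mul q s
  have : (q * s : ℚ) ≤ s.choose 2 + (q + 1).choose 2 := by linarith
  exact_mod_cast this

lemma mul_eq_choose_two_add_iff (q s : ℕ) :
    q * s = s.choose 2 + (q + 1).choose 2 ↔ s = q ∨ s = q + 1 := by
  have hgap := cast_choose_two_add_sub_mul q s
  calc q * s = s.choose 2 + (q + 1).choose 2
      ↔ (q * s : ℚ) = s.choose 2 + (q + 1).choose 2 := by norm_cast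
    _ ↔ ((s : ℚ) - q) * (s - (q + 1)) = 0 := by constructor <;> intro h <;> linarith
    _ ↔ s = q ∨ s = q + 1 := by
      rw [mul_eq_zero, sub_eq_zero, sub_eq_zero]
      norm_cast

lemma balancedWeights_iff_exists {E : Type} [Finite E] {w : E → ℕ} :
    BalancedWeights w ↔ ∃ q, ∀ e, w e = q ∨ w e = q + 1 := by
  constructor
  · intro hw
    rcases isEmpty_or_nonempty E with _ | _
    · exact ⟨0, isEmptyElim⟩
    · obtain ⟨e₀, he₀⟩ := Finite.exists_min w
      refine ⟨w e₀, fun e => ?_⟩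
      have := he₀ e
      have := hw e e₀
      omega
  · rintro ⟨q, hq⟩ e f
    have := hq e
    have := hq f
    omega

variable {E C : Type} [Fintype E] [Fintype C] {w : E → ℕ} {s : C → ℕ}

lemma mul_sum_le_sum_choose_two_add (s : C → ℕ) (q : ℕ) :
    q * ∑ c, s c ≤ ∑ c, (s c).choose 2 + Fintype.card C * (q + 1).choose 2 := by
  have := sum_le_sum fun c (_ : c ∈ univ) => mul_le_choose_two_add q (s c)
  simpa only [← mul_sum, sum_add_distrib, sum_const, card_univ, smul_eq_mul] using this

lemma mul_sum_eq_sum_choose_two_add_iff (s : C → ℕ) (q : ℕ) :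
    q * ∑ c, s c = ∑ c, (s c).choose 2 + Fintype.card C * (q + 1).choose 2 ↔
      ∀ c, s c = q ∨ s c = q + 1 := by
  have := sum_eq_sum_iff_of_le fun c (_ : c ∈ univ) => mul_le_choose_two_add q (s c)
  simpa only [← mul_sum, sum_add_distrib, sum_const, card_univ, smul_eq_mul,
    mul_eq_choose_two_add_iff, mem_univ, true_imp_iff] using this

lemma BalancedWeights.sum_choose_two_le (hw : BalancedWeights w)
    (hcard : Fintype.card E = Fintype.card C) (hsum : ∑ e, w e = ∑ c, s c) :
    ∑ e, (w e).choose 2 ≤ ∑ c, (s c).choose 2 := by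
  obtain ⟨q, hq⟩ := balancedWeights_iff_exists.1 hw
  have hwq := (mul_sum_eq_sum_choose_two_add_iff w q).2 hq
  have hsq := mul_sum_le_sum_choose_two_add s q
  rw [hcard, hsum] at hwq
  omega

lemma BalancedWeights.of_sum_choose_two_le (hw : BalancedWeights w)
    (hcard : Fintype.card E = Fintype.card C) (hsum : ∑ e, w e = ∑ c, s c)
    (hle : ∑ c, (s c).choose 2 ≤ ∑ e, (w e).choose 2) : BalancedWeights s := by
  obtain ⟨q, hq⟩ := balancedWeights_iff_exists.1 hw
  have hwq := (mul_sum_eq_sum_choose_two_add_iff w q).2 hq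
  have hsq := mul_sum_le_sum_choose_two_add s q
  rw [hcard, hsum] at hwq
  exact balancedWeights_iff_exists.2 ⟨q, (mul_sum_eq_sum_choose_two_add_iff s q).1 (by omega)⟩

lemma BalancedWeights.pos_of_card_le_sum (hw : BalancedWeights w)
    (hcard : Fintype.card E ≤ ∑ e, w e) (e : E) : 0 < w e := by
  by_contra! he
  have hlt : ∑ f, w f < ∑ _f : E, 1 :=
    sum_lt_sum (fun f _ => (hw f e).trans (by omega)) ⟨e, mem_univ e, by omega⟩
  simp only [sum_const, card_univ, smul_eq_mul, mul_one] at hlt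
  omega

lemma exists_balancedWeights (E : Type) [Fintype E] [Nonempty E] (m : ℕ) :
    ∃ w : E → ℕ, BalancedWeights w ∧ ∑ e, w e = m := by
  obtain ⟨S, -, hS⟩ := exists_subset_card_eq (s := (univ : Finset E))
    (n := m % Fintype.card E) (Nat.mod_lt _ Fintype.card_pos).le
  refine ⟨fun e => m / Fintype.card E + if e ∈ S then 1 else 0, fun e f => ?_, ?_⟩
  · dsimp only
    split_ifs <;> omega
  · rw [sum_add_distrib, sum_boole]
    simp [hS, Nat.div_add_mod]

lemma sum_choose_two_moveWeight_lt (w : E → ℕ) {e f : E} (h : w f + 2 ≤ w e) :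
    ∑ g, (moveWeight w e f g).choose 2 < ∑ g, (w g).choose 2 := by
  have hef : e ≠ f := by
    rintro rfl
    omega
  have hsplit (u : E → ℕ) : ∑ g, u g = u e + (u f + ∑ g ∈ (univ.erase e).erase f, u g) := by
    rw [add_sum_erase _ _ (by simp [hef.symm]), add_sum_erase _ _ (mem_univ e)]
  have hrest : ∑ g ∈ (univ.erase e).erase f, (moveWeight w e f g).choose 2 =
      ∑ g ∈ (univ.erase e).erase f, (w g).choose 2 := by
    refine sum_congr rfl fun g hg => ?_
    simp only [mem_erase, mem_univ, and_true] at hg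
    simp [moveWeight, hg.1, hg.2]
  obtain ⟨a, ha⟩ : ∃ a, w e = a + 1 := ⟨w e - 1, by omega⟩
  have hsucc (b : ℕ) : (b + 1).choose 2 = b + b.choose 2 := by simp [Nat.choose_succ_succ' b 1]
  rw [hsplit, hsplit fun g => (w g).choose 2, hrest]
  simp only [moveWeight, if_neg hef, if_true, ha, Nat.add_sub_cancel, hsucc]
  omega

end Convexity

namespace Multigraph

section Cuts

variable {G : Multigraph} {A B : Finset G.V} {F F' : Finset G.E} {e f g : G.E} {x y : G.V}

lemma mem_cutEdges : e ∈ G.cutEdges A ↔ ¬(G.src e ∈ A ↔ G.tgt e ∈ A) := by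
  simp only [cutEdges, mem_filter, mem_univ, true_and]
  tauto

lemma notMem_cutEdges : e ∉ G.cutEdges A ↔ (G.src e ∈ A ↔ G.tgt e ∈ A) := by
  rw [mem_cutEdges, not_not]

lemma cutEdges_empty : G.cutEdges ∅ = ∅ := by
  ext e
  simp [mem_cutEdges]

lemma cutEdges_univ : G.cutEdges univ = ∅ := by
  ext e
  simp [mem_cutEdges]

lemma cutEdges_symmDiff (A B : Finset G.V) :
    G.cutEdges (symmDiff A B) = symmDiff (G.cutEdges A) (G.cutEdges B) := by
  ext e
  simp only [mem_cutEdges, mem_symmDiff]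
  tauto

lemma cutEdges_compl [DecidableEq G.V] (A : Finset G.V) : G.cutEdges Aᶜ = G.cutEdges A := by
  ext e
  simp only [mem_cutEdges, mem_compl]
  tauto

lemma card_cutEdges_inter_add_card_cutEdges_union_le (A B : Finset G.V) :
    #(G.cutEdges (A ∩ B)) + #(G.cutEdges (A ∪ B)) ≤ #(G.cutEdges A) + #(G.cutEdges B) := by
  simp only [cutEdges, card_filter]
  rw [← sum_add_distrib, ← sum_add_distrib]
  refine sum_le_sum fun e _ => ?_
  by_cases h₁ : G.src e ∈ A <;> by_cases h₂ : G.tgt e ∈ A <;> by_cases h₃ : G.src e ∈ B <;>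
    by_cases h₄ : G.tgt e ∈ B <;> simp [h₁, h₂, h₃, h₄]

/-- The edge `e` has endpoints `x` and `y`, in either order. -/
def Joins (G : Multigraph) (e : G.E) (x y : G.V) : Prop :=
  (G.src e = x ∧ G.tgt e = y) ∨ (G.src e = y ∧ G.tgt e = x)

lemma joins_src_tgt (e : G.E) : G.Joins e (G.src e) (G.tgt e) := .inl ⟨rfl, rfl⟩

lemma Joins.symm (h : G.Joins e x y) : G.Joins e y x := Or.symm h

lemma Joins.mem_cutEdges_iff (h : G.Joins e x y) : e ∈ G.cutEdges A ↔ ¬(x ∈ A ↔ y ∈ A) := by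
  rw [mem_cutEdges]
  obtain ⟨rfl, rfl⟩ | ⟨rfl, rfl⟩ := h
  · rfl
  · exact not_congr iff_comm

lemma mem_of_reflTransGen_stepOn (hF : G.cutEdges A ⊆ F) (hx : x ∈ A)
    (hxy : Relation.ReflTransGen (G.stepOn (univ \ F)) x y) : y ∈ A := by
  induction hxy with
  | refl => exact hx
  | tail _ hstep ih =>
    obtain ⟨e, he, hjoin⟩ := hstep
    have hcut : e ∉ G.cutEdges A := fun h => (mem_sdiff.1 he).2 (hF h)
    rw [Joins.mem_cutEdges_iff hjoin, not_not] at hcut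
    exact hcut.1 ih

lemma disconnects_iff :
    G.Disconnects F ↔ ∃ A : Finset G.V, A.Nonempty ∧ A ≠ univ ∧ G.cutEdges A ⊆ F := by
  constructor
  · intro h
    simp only [Disconnects, ConnOn, not_forall] at h
    obtain ⟨u, v, huv⟩ := h
    set reach := Relation.ReflTransGen (G.stepOn (univ \ F)) u
    refine ⟨univ.filter reach, ⟨u, by simpa using .refl⟩, fun h => huv ?_, fun e he => ?_⟩
    · exact (mem_filter.1 (h.symm ▸ mem_univ v)).2
    · by_contra heF
      have hstep {x y : G.V} (hxy : G.Joins e x y) : G.stepOn (univ \ F) x y :=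
        ⟨e, by simpa using heF, hxy⟩
      simp only [mem_cutEdges, mem_filter, mem_univ, true_and] at he
      exact he ⟨fun h => h.tail (hstep (joins_src_tgt e)),
        fun h => h.tail (hstep (joins_src_tgt e).symm)⟩
  · rintro ⟨A, ⟨u, hu⟩, hA, hF⟩ hconn
    exact hA (eq_univ_of_forall fun v => mem_of_reflTransGen_stepOn hF hu (hconn u v))

lemma Disconnects.mono (h : G.Disconnects F) (hF : F ⊆ F') : G.Disconnects F' := by
  rw [disconnects_iff] at h ⊢
  obtain ⟨A, hne, huniv, hA⟩ := h
  exact ⟨A, hne, huniv, hA.trans hF⟩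

lemma connected_iff_not_disconnects_empty : G.Connected ↔ ¬G.Disconnects ∅ := by
  simp [Connected, Disconnects]

lemma Connected.cutEdges_nonempty (hG : G.Connected) (hA : A.Nonempty) (huniv : A ≠ univ) :
    (G.cutEdges A).Nonempty := by
  rw [nonempty_iff_ne_empty]
  intro h
  exact connected_iff_not_disconnects_empty.1 hG (disconnects_iff.2 ⟨A, hA, huniv, h.le⟩)

lemma exists_joins_of_mem_cutEdges_singleton (he : e ∈ G.cutEdges {x}) : ∃ y, G.Joins e x y := by
  simp only [mem_cutEdges, mem_singleton] at he
  by_cases hsrc : G.src e = x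
  · exact ⟨G.tgt e, .inl ⟨hsrc, rfl⟩⟩
  · exact ⟨G.src e, .inr ⟨rfl, by tauto⟩⟩

lemma Connected.exists_joins [Nonempty G.E] (hG : G.Connected) (x : G.V) :
    ∃ e y, G.Joins e x y := by
  by_cases hx : ({x} : Finset G.V) = univ
  · obtain ⟨e⟩ := ‹Nonempty G.E›
    have hsrc : G.src e = x := mem_singleton.1 (hx ▸ mem_univ _)
    exact ⟨e, G.tgt e, .inl ⟨hsrc, rfl⟩⟩
  · obtain ⟨e, he⟩ := hG.cutEdges_nonempty (singleton_nonempty x) hx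
    exact ⟨e, exists_joins_of_mem_cutEdges_singleton he⟩

lemma Disconnects.exists_mem_cutEdges (h : G.Disconnects (insert e F)) (hF : ¬G.Disconnects F) :
    ∃ A, e ∈ G.cutEdges A ∧ G.cutEdges A ⊆ insert e F := by
  obtain ⟨A, hne, huniv, hA⟩ := disconnects_iff.1 h
  refine ⟨A, ?_, hA⟩
  by_contra he
  exact hF (disconnects_iff.2 ⟨A, hne, huniv, (subset_insert_iff_of_notMem he).1 hA⟩)

lemma Disconnects.of_insert_loop (h : G.Disconnects (insert e F)) (he : G.src e = G.tgt e) :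
    G.Disconnects F := by
  by_contra hF
  obtain ⟨A, heA, -⟩ := h.exists_mem_cutEdges hF
  exact mem_cutEdges.1 heA (by rw [he])

lemma disconnects_of_cutEdges_subset (hne : (G.cutEdges A).Nonempty) (hA : G.cutEdges A ⊆ F) :
    G.Disconnects F := by
  refine disconnects_iff.2 ⟨A, nonempty_iff_ne_empty.2 ?_, ?_, hA⟩
  · rintro rfl
    simp [cutEdges_empty] at hne
  · rintro rfl
    simp [cutEdges_univ] at hne

/- If the cuts of `A` and `B` are `{e, f}` and `{f, g}`, the cut of `symmDiff A B` is `{e, g}`. -/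
lemma Disconnects.pair_trans (hef : G.Disconnects {e, f}) (hfg : G.Disconnects {f, g})
    (hf : ¬G.Disconnects {f}) (heg : e ≠ g) : G.Disconnects {e, g} := by
  by_cases hg : G.Disconnects {g}
  · exact hg.mono (by simp)
  obtain ⟨A, heA, hA⟩ := hef.exists_mem_cutEdges hf
  obtain ⟨B, hfB, hB⟩ := hfg.exists_mem_cutEdges hg
  by_cases hfA : f ∈ G.cutEdges A
  swap
  · refine disconnects_of_cutEdges_subset ⟨e, heA⟩ fun x hx => ?_
    have := hA hx
    simp only [mem_insert, mem_singleton] at *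
    grind
  have heB : e ∉ G.cutEdges B := fun h => by
    have := hB h
    simp only [mem_insert, mem_singleton, heg, or_false] at this
    exact hf (disconnects_of_cutEdges_subset (A := A) ⟨e, heA⟩ (by simpa [this] using hA))
  refine disconnects_of_cutEdges_subset (A := symmDiff A B) ?_ ?_ <;> rw [cutEdges_symmDiff]
  · exact ⟨e, mem_symmDiff.2 (.inl ⟨heA, heB⟩)⟩
  · intro x hx
    have hxA := @hA x
    have hxB := @hB x
    rw [mem_symmDiff] at hx
    simp only [mem_insert, mem_singleton] at *
    grind

end Cuts

section EdgeConnectivity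

variable {G : Multigraph} {c k : ℕ}

/-- `c`-edge-connectivity: every disconnection has at least `c` edges. Graphs with at most one
vertex have no disconnections, so they are `c`-edge-connected for every `c`. -/
def IsEdgeConnected (G : Multigraph) (c : ℕ) : Prop :=
  ∀ F : Finset G.E, G.Disconnects F → c ≤ #F

lemma isEdgeConnected_iff : G.IsEdgeConnected c ↔
    ∀ A : Finset G.V, A.Nonempty → A ≠ univ → c ≤ #(G.cutEdges A) := by
  constructor
  · exact fun h A hA huniv => h _ (disconnects_iff.2 ⟨A, hA, huniv, Subset.rfl⟩)
  · intro h F hF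
    obtain ⟨A, hA, huniv, hAF⟩ := disconnects_iff.1 hF
    exact (h A hA huniv).trans (card_le_card hAF)

lemma IsEdgeConnected.not_disconnects {F : Finset G.E} (hG : G.IsEdgeConnected c)
    (hF : #F < c) : ¬G.Disconnects F :=
  fun h => (hG F h).not_gt hF

lemma IsEdgeConnected.connected (hG : G.IsEdgeConnected c) (hc : 0 < c) : G.Connected :=
  connected_iff_not_disconnects_empty.2 (hG.not_disconnects (by simpa using hc))

lemma d_eq_zero_iff {i : ℕ} (hi : i ≤ G.nE) : G.d i = 0 ↔ G.IsEdgeConnected (i + 1) := by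
  simp only [d, card_eq_zero, filter_eq_empty_iff, mem_univ, true_imp_iff, not_and]
  constructor
  · intro h F hF
    by_contra! hlt
    obtain ⟨F', hsub, hcard⟩ := exists_superset_card_eq (Nat.le_of_lt_succ hlt) hi
    exact h hcard (hF.mono hsub)
  · exact fun h F hF => h.not_disconnects (by omega)

lemma isEdgeConnected_three_of_forall_pair (hE : 2 ≤ G.nE)
    (h : ∀ e f, e ≠ f → ¬G.Disconnects {e, f}) : G.IsEdgeConnected 3 := by
  rw [← d_eq_zero_iff hE, d, card_eq_zero, filter_eq_empty_iff]
  rintro F - ⟨hF, hdisc⟩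
  obtain ⟨e, f, hef, rfl⟩ := card_eq_two.1 hF
  exact h e f hef hdisc

lemma nV_pos_of_nE_pos (h : 0 < G.nE) : 0 < G.nV := by
  obtain ⟨e⟩ := Fintype.card_pos_iff.1 h
  exact Fintype.card_pos_iff.2 ⟨G.src e⟩

lemma sum_deg (G : Multigraph) : ∑ v, G.deg v = 2 * G.nE := by
  have hsrc := card_eq_sum_card_fiberwise (f := G.src) (s := univ) (t := univ) (by simp)
  have htgt := card_eq_sum_card_fiberwise (f := G.tgt) (s := univ) (t := univ) (by simp)
  rw [card_univ] at hsrc htgt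
  simp only [deg, sum_add_distrib, nE]
  omega

lemma card_cutEdges_singleton_add_two_mul (v : G.V) :
    #(G.cutEdges {v}) + 2 * #(univ.filter fun e => G.Joins e v v) = G.deg v := by
  simp only [deg, cutEdges, card_filter, mul_sum, ← sum_add_distrib]
  refine sum_congr rfl fun e _ => ?_
  by_cases hsrc : G.src e = v <;> by_cases htgt : G.tgt e = v <;> simp [Joins, hsrc, htgt]

lemma IsEdgeConnected.le_card_cutEdges_singleton (hG : G.IsEdgeConnected c) (hV : 1 < G.nV)
    (v : G.V) : c ≤ #(G.cutEdges {v}) := by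
  obtain ⟨u, hu⟩ := Fintype.exists_ne_of_one_lt_card hV v
  refine isEdgeConnected_iff.1 hG {v} (singleton_nonempty v) fun h => hu ?_
  exact mem_singleton.1 (h ▸ mem_univ u)

lemma IsEdgeConnected.le_deg (hG : G.IsEdgeConnected c) (hV : 1 < G.nV) (v : G.V) :
    c ≤ G.deg v := by
  have := hG.le_card_cutEdges_singleton hV v
  have := card_cutEdges_singleton_add_two_mul v
  omega

lemma mul_nV_le_two_mul_nE (h : ∀ v, c ≤ G.deg v) : c * G.nV ≤ 2 * G.nE := by
  rw [← sum_deg, mul_comm]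
  exact card_nsmul_le_sum univ G.deg c fun v _ => h v

lemma IsEdgeConnected.nV_le (hG : G.IsEdgeConnected 3) (hk : 1 ≤ k) (hE : G.nE = G.nV + k) :
    G.nV ≤ 2 * k := by
  by_cases hV : 1 < G.nV
  · have := mul_nV_le_two_mul_nE (hG.le_deg hV)
    omega
  · omega

protected lemma IsEdgeConnected.memDk (hG : G.IsEdgeConnected 3) (hk : 1 ≤ k) (hE : G.nE = G.nV + k)
    (hV : G.nV = 2 * k) : memDk k G := by
  have hdeg (v : G.V) (_ : v ∈ univ) : 3 ≤ G.deg v := hG.le_deg (by omega) v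
  have hsum : ∑ _v : G.V, 3 = ∑ v, G.deg v := by
    rw [sum_deg, sum_const, smul_eq_mul, card_univ]
    change G.nV * 3 = _
    omega
  exact ⟨hG.connected (by omega),
    fun v => ((sum_eq_sum_iff_of_le hdeg).1 hsum v (mem_univ v)).symm, hG, hE⟩

lemma nV_eq_of_memDk (hG : memDk k G) : G.nV = 2 * k := by
  have hsum := G.sum_deg
  simp only [hG.2.1, sum_const, smul_eq_mul, card_univ] at hsum
  change G.nV * 3 = _ at hsum
  have := hG.2.2.2
  omega

lemma nE_eq_of_memDk (hG : memDk k G) : G.nE = 3 * k := by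
  rw [hG.2.2.2, nV_eq_of_memDk hG]
  ring

end EdgeConnectivity

end Multigraph

namespace Multigraph

section Contraction

/-- `G` arises from `D` by contracting a set of edges: `eMap` embeds the edges of `G` as the edges
of `D` that survive, and the fibres of `vMap` are the components of the contracted edges. The
latter is expressed by `fiber`, which says that the fibres are not separated by any vertex set `A`
whose cut consists of surviving edges. -/
structure Contraction (D G : Multigraph) where
  vMap : D.V → G.V
  eMap : G.E ↪ D.E
  vMap_surjective : Function.Surjective vMap
  joins (e : G.E) : G.Joins e (vMap (D.src (eMap e))) (vMap (D.tgt (eMap e)))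
  vMap_src_eq_vMap_tgt (e : D.E) : e ∉ Set.range eMap → vMap (D.src e) = vMap (D.tgt e)
  fiber (A : Finset D.V) : (∀ e ∈ D.cutEdges A, e ∈ Set.range eMap) →
    ∀ u v, vMap u = vMap v → (u ∈ A ↔ v ∈ A)

namespace Contraction

variable {D G H : Multigraph}

/-- The trivial contraction, of no edges. -/
def refl (G : Multigraph) : Contraction G G where
  vMap := id
  eMap := .refl _
  vMap_surjective := Function.surjective_id
  joins := joins_src_tgt
  vMap_src_eq_vMap_tgt e he := absurd ⟨e, rfl⟩ he
  fiber A _ u v huv := by rw [show u = v from huv]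

/-- An isomorphism, viewed as a contraction of no edges. -/
def ofIso (φ : MGIso D G) : Contraction D G where
  vMap := φ.vMap
  eMap := φ.eMap.symm.toEmbedding
  vMap_surjective := φ.vMap.surjective
  joins e := by simpa using! φ.ends_eq (φ.eMap.symm e)
  vMap_src_eq_vMap_tgt e he := absurd ⟨φ.eMap e, by simp⟩ he
  fiber A _ u v huv := by rw [φ.vMap.injective huv]

/-- The contraction of a single edge. -/
def contractEdge (G : Multigraph) (e : G.E) : Contraction G (G.contract e) where
  vMap := Quot.mk _
  eMap := .subtype _
  vMap_surjective := Quot.mk_surjective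
  joins f := joins_src_tgt (G := G.contract e) f
  vMap_src_eq_vMap_tgt f hf := by
    obtain rfl : f = e := by
      by_contra hne
      exact hf ⟨⟨f, hne⟩, rfl⟩
    exact Quot.sound ⟨rfl, rfl⟩
  fiber A hA u v huv := by
    have he : e ∉ G.cutEdges A := fun h => by
      obtain ⟨f, hf⟩ := hA e h
      exact f.2 hf
    have hrel (x y : G.V) (hxy : contractRel G e x y) : (x ∈ A) = (y ∈ A) := by
      rw [hxy.1, hxy.2, eq_iff_iff, ← notMem_cutEdges]
      exact he
    exact (congrArg (Quot.lift (· ∈ A) hrel) huv).to_iff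

variable (φ : Contraction D G)

lemma eMap_mem_cutEdges_preimage_iff (B : Finset G.V) (e : G.E) :
    φ.eMap e ∈ D.cutEdges (univ.filter fun v => φ.vMap v ∈ B) ↔ e ∈ G.cutEdges B := by
  rw [(φ.joins e).mem_cutEdges_iff, mem_cutEdges]
  simp

lemma cutEdges_preimage (B : Finset G.V) :
    D.cutEdges (univ.filter fun v => φ.vMap v ∈ B) = (G.cutEdges B).map φ.eMap := by
  ext e
  by_cases he : e ∈ Set.range φ.eMap
  · obtain ⟨e, rfl⟩ := he
    simp only [eMap_mem_cutEdges_preimage_iff, mem_map']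
  · have hmap : e ∉ (G.cutEdges B).map φ.eMap := fun h => by
      obtain ⟨f, -, rfl⟩ := mem_map.1 h
      exact he ⟨f, rfl⟩
    simp [mem_cutEdges, hmap, φ.vMap_src_eq_vMap_tgt e he]

lemma preimage_image {A : Finset D.V} (hA : ∀ e ∈ D.cutEdges A, e ∈ Set.range φ.eMap) :
    (univ.filter fun v => φ.vMap v ∈ A.image φ.vMap) = A := by
  ext v
  simp only [mem_filter, mem_univ, true_and, mem_image]
  exact ⟨fun ⟨u, hu, huv⟩ => (φ.fiber A hA u v huv).1 hu, fun hv => ⟨v, hv, rfl⟩⟩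

lemma disconnects_map_iff {F : Finset G.E} :
    D.Disconnects (F.map φ.eMap) ↔ G.Disconnects F := by
  rw [disconnects_iff, disconnects_iff]
  constructor
  · rintro ⟨A, hne, huniv, hA⟩
    have hpre : (univ.filter fun v => φ.vMap v ∈ A.image φ.vMap) = A := by
      refine φ.preimage_image fun e he => ?_
      obtain ⟨f, -, rfl⟩ := mem_map.1 (hA he)
      exact ⟨f, rfl⟩
    refine ⟨A.image φ.vMap, hne.image _, fun h => huniv ?_, ?_⟩
    · simpa [h] using hpre.symm
    · rwa [← hpre, φ.cutEdges_preimage, map_subset_map] at hA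
  · rintro ⟨B, ⟨b, hb⟩, huniv, hB⟩
    refine ⟨_, ?_, fun h => huniv ?_, (φ.cutEdges_preimage B).le.trans (map_subset_map.2 hB)⟩
    · obtain ⟨v, rfl⟩ := φ.vMap_surjective b
      exact ⟨v, by simpa using hb⟩
    · refine eq_univ_of_forall fun b => ?_
      obtain ⟨v, rfl⟩ := φ.vMap_surjective b
      simpa using Finset.ext_iff.1 h v

lemma disconnects_pair_iff {e f : G.E} :
    D.Disconnects {φ.eMap e, φ.eMap f} ↔ G.Disconnects {e, f} := by
  rw [← φ.disconnects_map_iff, map_insert, map_singleton]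

lemma connected_iff (φ : Contraction D G) : D.Connected ↔ G.Connected := by
  rw [connected_iff_not_disconnects_empty, connected_iff_not_disconnects_empty,
    ← φ.disconnects_map_iff, map_empty]

lemma isEdgeConnected {c : ℕ} (φ : Contraction D G) (hD : D.IsEdgeConnected c) :
    G.IsEdgeConnected c := fun _ hF =>
  (hD _ (φ.disconnects_map_iff.2 hF)).trans_eq (card_map _)

/-- The composition of contractions. -/
def trans (ψ : Contraction G H) : Contraction D H where
  vMap := ψ.vMap ∘ φ.vMap
  eMap := ψ.eMap.trans φ.eMap
  vMap_surjective := ψ.vMap_surjective.comp φ.vMap_surjective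
  joins e := by
    have hψ := ψ.joins e
    obtain ⟨hsrc, htgt⟩ | ⟨hsrc, htgt⟩ := φ.joins (ψ.eMap e)
    · simpa [hsrc, htgt] using hψ
    · simpa [hsrc, htgt] using hψ.symm
  vMap_src_eq_vMap_tgt e he := by
    by_cases heφ : e ∈ Set.range φ.eMap
    · obtain ⟨f, rfl⟩ := heφ
      have hf := ψ.vMap_src_eq_vMap_tgt f fun ⟨g, hg⟩ => he ⟨g, by simp [hg]⟩
      obtain ⟨hsrc, htgt⟩ | ⟨hsrc, htgt⟩ := φ.joins f
      · simp [← hsrc, ← htgt, hf]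
      · simp [← hsrc, ← htgt, hf]
    · simp [φ.vMap_src_eq_vMap_tgt e heφ]
  fiber A hA u v huv := by
    have hpre := φ.preimage_image (A := A) fun e he => by
      obtain ⟨f, rfl⟩ := hA e he
      exact ⟨ψ.eMap f, rfl⟩
    have hmem (x : D.V) : φ.vMap x ∈ A.image φ.vMap ↔ x ∈ A := by
      conv_rhs => rw [← hpre]
      simp
    rw [← hmem, ← hmem v]
    refine ψ.fiber _ (fun e he => ?_) _ _ huv
    rw [← φ.eMap_mem_cutEdges_preimage_iff, hpre] at he
    obtain ⟨f, hf⟩ := hA _ he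
    exact ⟨f, φ.eMap.injective hf⟩

end Contraction

lemma _root_.IsIso.d_eq {G H : Multigraph} (h : IsIso G H) (i : ℕ) : G.d i = H.d i := by
  obtain ⟨φ⟩ := h
  refine (card_equiv φ.eMap.symm.finsetCongr fun F => ?_).symm
  have := (Contraction.ofIso φ).disconnects_map_iff (F := F)
  simp_all [Contraction.ofIso]

/-- The contracted graph has the vertices other than one end of the contracted edge. -/
def contractEquiv {G : Multigraph} {e : G.E} (he : G.src e ≠ G.tgt e) :
    (G.contract e).V ≃ {v : G.V // v ≠ G.tgt e} where
  toFun := Quot.lift (fun v => if h : v = G.tgt e then ⟨G.src e, he⟩ else ⟨v, h⟩) <| by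
    rintro u v ⟨rfl, rfl⟩
    simp [he]
  invFun v := Quot.mk _ v.1
  left_inv := by
    rintro ⟨v⟩
    by_cases h : v = G.tgt e
    · simp only [h, dite_true]
      exact Quot.sound ⟨rfl, rfl⟩
    · simp only [h, dite_false]
      rfl
  right_inv v := by simp [v.2]

lemma nV_contract_add_one {G : Multigraph} {e : G.E} (he : G.src e ≠ G.tgt e) :
    (G.contract e).nV + 1 = G.nV := by
  have hcard : (G.contract e).nV = Fintype.card {v : G.V // v ≠ G.tgt e} :=
    Fintype.card_congr (contractEquiv he)
  have hpos : 0 < G.nV := Fintype.card_pos_iff.2 ⟨G.tgt e⟩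
  rw [hcard, Fintype.card_subtype_compl, Fintype.card_subtype_eq]
  exact Nat.sub_add_cancel hpos

lemma nE_contract_add_one {G : Multigraph} (e : G.E) : (G.contract e).nE + 1 = G.nE := by
  have hcard : (G.contract e).nE = Fintype.card {f : G.E // f ≠ e} :=
    Fintype.card_congr (.refl _)
  have hpos : 0 < G.nE := Fintype.card_pos_iff.2 ⟨e⟩
  rw [hcard, Fintype.card_subtype_compl, Fintype.card_subtype_eq]
  exact Nat.sub_add_cancel hpos

end Contraction

end Multigraph

lemma card_symmDiff_add_two_mul_card_inter {α : Type} (s t : Finset α) :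
    #(symmDiff s t) + 2 * #(s ∩ t) = #s + #t := by
  have hst := card_sdiff_add_card_inter s t
  have hts := card_sdiff_add_card_inter t s
  rw [inter_comm t s] at hts
  rw [symmDiff_def, sup_eq_union, card_union_of_disjoint disjoint_sdiff_sdiff]
  omega

namespace Multigraph

section Expansion

variable {G : Multigraph} {v : G.V} {A : Finset G.V} {S : Finset (G.E × Bool)} {c k N : ℕ}

/-- The vertex of a half-edge. A half-edge is an edge together with one of its two ends, the source
being labelled `true` and the target `false`. -/
def halfEnd (G : Multigraph) (h : G.E × Bool) : G.V := if h.2 then G.src h.1 else G.tgt h.1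

lemma joins_halfEnd (h : G.E × Bool) : G.Joins h.1 (G.halfEnd h) (G.halfEnd (h.1, !h.2)) := by
  obtain ⟨e, _ | _⟩ := h
  · exact (joins_src_tgt e).symm
  · exact joins_src_tgt e

lemma mem_cutEdges_iff_of_halfEnd_notMem {h : G.E × Bool} (hA : G.halfEnd h ∉ A) :
    h.1 ∈ G.cutEdges A ↔ G.halfEnd (h.1, !h.2) ∈ A := by
  rw [(joins_halfEnd h).mem_cutEdges_iff]
  tauto

lemma card_filter_halfEnd_eq (v : G.V) : #{h | G.halfEnd h = v} = G.deg v := by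
  have hsrc (e : G.E) : G.halfEnd (e, true) = G.src e := rfl
  have htgt (e : G.E) : G.halfEnd (e, false) = G.tgt e := rfl
  simp only [deg, card_filter, Fintype.sum_prod_type, Fintype.sum_bool, sum_add_distrib, hsrc, htgt]

lemma exists_halfEdge_notMem_cutEdges (hA : #(G.cutEdges A) < G.deg v) :
    ∃ h, G.halfEnd h = v ∧ h.1 ∉ G.cutEdges A := by
  by_contra! hall
  rw [← card_filter_halfEnd_eq] at hA
  refine hA.not_ge (card_le_card_of_injOn Prod.fst (fun h hh => ?_) ?_)
  · exact hall h (mem_filter.1 hh).2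
  · rintro ⟨e, b⟩ hb ⟨e', b'⟩ hb' (rfl : e = e')
    have hb := (mem_filter.1 hb).2
    have hb' := (mem_filter.1 hb').2
    have hcut := mem_cutEdges.1 (hall _ hb)
    cases b <;> cases b' <;> simp_all [halfEnd]

lemma exists_halfEdge_ne (hv : 2 < G.deg v) (e : G.E) : ∃ h, G.halfEnd h = v ∧ h.1 ≠ e := by
  by_contra! hall
  have hsub : ({h | G.halfEnd h = v} : Finset _) ⊆ {(e, true), (e, false)} := by
    rintro ⟨f, b⟩ hf
    obtain rfl : f = e := hall _ (mem_filter.1 hf).2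
    cases b <;> simp
  have := (card_le_card hsub).trans card_le_two
  rw [card_filter_halfEnd_eq] at this
  omega

/- The second half-edge is chosen to avoid the cut of a maximal `M` that is bad for the first: by
submodularity, any `A` bad for both could be added to `M`. -/
lemma IsEdgeConnected.exists_halfEdge_pair (hG : G.IsEdgeConnected c) (hc : 2 ≤ c)
    (hv : c < G.deg v) : ∃ h₁ h₂ : G.E × Bool, G.halfEnd h₁ = v ∧ G.halfEnd h₂ = v ∧ h₁.1 ≠ h₂.1 ∧
      ∀ A, v ∉ A → h₁.1 ∈ G.cutEdges A → h₂.1 ∈ G.cutEdges A → c < #(G.cutEdges A) := by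
  obtain ⟨h₁, hh₁, -⟩ := exists_halfEdge_notMem_cutEdges (v := v) (A := ∅)
    (by simp only [cutEdges_empty, card_empty]; omega)
  set bad : Finset (Finset G.V) :=
    {A | v ∉ A ∧ h₁.1 ∈ G.cutEdges A ∧ #(G.cutEdges A) ≤ c}
  rcases bad.eq_empty_or_nonempty with hempty | hne
  · obtain ⟨h₂, hh₂, hne⟩ := exists_halfEdge_ne (v := v) (by omega) h₁.1
    refine ⟨h₁, h₂, hh₁, hh₂, hne.symm, fun A hvA hA _ => ?_⟩
    by_contra! hle
    exact notMem_empty A (hempty ▸ mem_filter.2 ⟨mem_univ A, hvA, hA, hle⟩)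
  obtain ⟨M, hM⟩ := bad.exists_maximal hne
  obtain ⟨hvM, hM₁, hMc⟩ := (mem_filter.1 hM.prop).2
  obtain ⟨h₂, hh₂, hM₂⟩ := exists_halfEdge_notMem_cutEdges (hMc.trans_lt hv)
  refine ⟨h₁, h₂, hh₁, hh₂, fun h => hM₂ (h ▸ hM₁), fun A hvA hA₁ hA₂ => ?_⟩
  rw [mem_cutEdges_iff_of_halfEnd_notMem (by rwa [hh₁])] at hM₁ hA₁
  rw [mem_cutEdges_iff_of_halfEnd_notMem (by rwa [hh₂])] at hM₂ hA₂
  by_contra! hAc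
  have hinter : c ≤ #(G.cutEdges (M ∩ A)) :=
    isEdgeConnected_iff.1 hG _ ⟨_, mem_inter.2 ⟨hM₁, hA₁⟩⟩ fun h =>
      hvM (mem_inter.1 (h ▸ mem_univ v)).1
  have hsub := card_cutEdges_inter_add_card_cutEdges_union_le M A
  have hv : v ∉ M ∪ A := by simp [hvM, hvA]
  have hunion : M ∪ A ∈ bad := by
    refine mem_filter.2 ⟨mem_univ _, hv, ?_, by omega⟩
    rw [mem_cutEdges_iff_of_halfEnd_notMem (by rwa [hh₁])]
    exact mem_union_left _ hM₁
  exact hM₂ (hM.le_of_ge hunion subset_union_left (mem_union_right _ hA₂))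

/-- The expansion of an edge at `v`: the new edge `none` joins the new vertex `none` to `v`, and the
half-edges in `S`, which should lie at `v`, are moved to the new vertex. -/
abbrev expand (G : Multigraph) (v : G.V) (S : Finset (G.E × Bool)) : Multigraph where
  V := Option G.V
  E := Option G.E
  src o := o.elim none fun e => if (e, true) ∈ S then none else some (G.src e)
  tgt o := o.elim (some v) fun e => if (e, false) ∈ S then none else some (G.tgt e)

lemma nV_expand (v : G.V) (S : Finset (G.E × Bool)) : (G.expand v S).nV = G.nV + 1 :=
  Fintype.card_option

lemma nE_expand (v : G.V) (S : Finset (G.E × Bool)) : (G.expand v S).nE = G.nE + 1 :=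
  Fintype.card_option

lemma getD_src_expand (hS : ∀ h ∈ S, G.halfEnd h = v) (e : G.E) :
    Option.getD ((G.expand v S).src (some e)) v = G.src e := by
  by_cases he : (e, true) ∈ S
  · simpa [expand, he, halfEnd] using (hS _ he).symm
  · simp [he]

lemma getD_tgt_expand (hS : ∀ h ∈ S, G.halfEnd h = v) (e : G.E) :
    Option.getD ((G.expand v S).tgt (some e)) v = G.tgt e := by
  by_cases he : (e, false) ∈ S
  · simpa [expand, he, halfEnd] using (hS _ he).symm
  · simp [he]

/-- Contracting the new edge of an expansion gives back the original graph. -/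
def expandContraction (hS : ∀ h ∈ S, G.halfEnd h = v) : Contraction (G.expand v S) G where
  vMap o := o.getD v
  eMap := .some
  vMap_surjective x := ⟨some x, rfl⟩
  joins e := .inl ⟨(getD_src_expand hS e).symm, (getD_tgt_expand hS e).symm⟩
  vMap_src_eq_vMap_tgt o ho := by
    cases o with
    | none => rfl
    | some e => exact absurd ⟨e, rfl⟩ ho
  fiber A hA x y hxy := by
    have hnone : none ∉ (G.expand v S).cutEdges A := fun h => by
      obtain ⟨e, he⟩ := hA _ h
      cases he
    have hmem (o : Option G.V) : o ∈ A ↔ some (o.getD v) ∈ A := by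
      cases o with
      | none => exact notMem_cutEdges.1 hnone
      | some x => rfl
    have hxy : Option.getD x v = Option.getD y v := hxy
    exact (hmem x).trans (hxy ▸ (hmem y).symm)

lemma cutEdges_expand_insertNone (hS : ∀ h ∈ S, G.halfEnd h = v)
    (hinj : Set.InjOn Prod.fst (S : Set (G.E × Bool))) (hv : v ∉ A) :
    (G.expand v S).cutEdges (insertNone A) =
      insertNone (symmDiff (G.cutEdges A) (S.image Prod.fst)) := by
  ext o
  cases o with
  | none => simp [mem_cutEdges (G := G.expand v S), hv]
  | some e =>
    have hinj' : ¬((e, true) ∈ S ∧ (e, false) ∈ S) := fun h => by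
      simpa using hinj h.1 h.2 rfl
    have htrue : (e, true) ∈ S → G.src e ∉ A := fun h => by
      rwa [show G.src e = v from hS _ h]
    have hfalse : (e, false) ∈ S → G.tgt e ∉ A := fun h => by
      rwa [show G.tgt e = v from hS _ h]
    rw [some_mem_insertNone, mem_symmDiff, mem_cutEdges, mem_cutEdges (G := G)]
    by_cases h₁ : (e, true) ∈ S <;> by_cases h₂ : (e, false) ∈ S <;>
      simp_all

lemma IsEdgeConnected.expand (hG : G.IsEdgeConnected c) (hS : ∀ h ∈ S, G.halfEnd h = v)
    (hinj : Set.InjOn Prod.fst (S : Set (G.E × Bool)))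
    (hcut : ∀ A, v ∉ A → c ≤ #(symmDiff (G.cutEdges A) (S.image Prod.fst)) + 1) :
    (G.expand v S).IsEdgeConnected c := by
  rw [isEdgeConnected_iff] at hG ⊢
  suffices hnone : ∀ B : Finset (Option G.V), none ∈ B → B ≠ univ →
      c ≤ #((G.expand v S).cutEdges B) by
    intro B hne huniv
    by_cases hB : none ∈ B
    · exact hnone B hB huniv
    · rw [← cutEdges_compl]
      exact hnone _ (by simpa using hB) (by simpa using hne.ne_empty)
  intro B hB huniv
  obtain ⟨A, rfl⟩ : ∃ A, B = insertNone A := ⟨eraseNone B, by simp [hB]⟩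
  by_cases hv : v ∈ A
  · have hpre : (univ.filter fun o : Option G.V => o.getD v ∈ A) = insertNone A := by
      ext o
      cases o <;> simp [hv]
    have hcard := congrArg card ((expandContraction hS).cutEdges_preimage A)
    rw [card_map] at hcard
    refine (hG A ⟨v, hv⟩ fun h => huniv ?_).trans (hcard.symm.trans_le (card_le_card ?_))
    · exact eq_univ_of_forall fun o => by cases o <;> simp [h]
    · exact hpre ▸ Subset.rfl
  · rw [cutEdges_expand_insertNone hS hinj hv, card_insertNone]
    exact hcut A hv

lemma IsEdgeConnected.exists_contraction (hG : G.IsEdgeConnected 3) (hv : 3 < G.deg v) :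
    ∃ D : Multigraph, D.IsEdgeConnected 3 ∧ D.nV = G.nV + 1 ∧ D.nE = G.nE + 1 ∧
      Nonempty (Contraction D G) := by
  obtain ⟨h₁, h₂, hh₁, hh₂, hne, hpair⟩ := hG.exists_halfEdge_pair (by omega) hv
  have hS : ∀ h ∈ ({h₁, h₂} : Finset _), G.halfEnd h = v := by simp [hh₁, hh₂]
  refine ⟨G.expand v {h₁, h₂}, hG.expand hS (fun h hh h' hh' hfst => ?_) (fun A hA => ?_),
    nV_expand _ _, nE_expand _ _, ⟨expandContraction hS⟩⟩
  · simp only [coe_insert, coe_singleton, Set.mem_insert_iff, Set.mem_singleton_iff] at hh hh'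
    grind
  · rw [image_insert, image_singleton]
    set T : Finset G.E := {h₁.1, h₂.1}
    have hsymm := card_symmDiff_add_two_mul_card_inter (G.cutEdges A) T
    have hT : #T = 2 := card_pair hne
    have hle : #(G.cutEdges A ∩ T) ≤ #T := card_le_card inter_subset_right
    have hone : 0 < #(G.cutEdges A ∩ T) → 3 ≤ #(G.cutEdges A) := fun h =>
      hG _ (disconnects_of_cutEdges_subset ((card_pos.1 h).mono inter_subset_left) Subset.rfl)
    have htwo : #T ≤ #(G.cutEdges A ∩ T) → 3 < #(G.cutEdges A) := fun h => by
      have hsub := inter_eq_right.1 (eq_of_subset_of_card_le inter_subset_right h)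
      exact hpair A hA (hsub (by simp [T])) (hsub (by simp [T]))
    omega

lemma IsEdgeConnected.exists_contraction_nV_eq (hG : G.IsEdgeConnected 3)
    (hE : G.nE = G.nV + k) (hN : G.nV ≤ N) (hk : N ≤ 2 * k) :
    ∃ D : Multigraph, D.IsEdgeConnected 3 ∧ D.nV = N ∧ D.nE = N + k ∧
      Nonempty (Contraction D G) := by
  induction N, hN using Nat.le_induction with
  | base => exact ⟨G, hG, rfl, hE, ⟨.refl G⟩⟩
  | succ N _ ih =>
    obtain ⟨D, hD, hDV, hDE, ⟨φ⟩⟩ := ih (by omega)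
    obtain ⟨v, hv⟩ : ∃ v, 3 < D.deg v := by
      by_contra! hle
      have hsum := sum_le_card_nsmul univ D.deg 3 fun v _ => hle v
      rw [sum_deg, smul_eq_mul, card_univ] at hsum
      change _ ≤ D.nV * 3 at hsum
      omega
    obtain ⟨D', hD', hDV', hDE', ⟨ψ⟩⟩ := hD.exists_contraction hv
    exact ⟨D', hD', by omega, by omega, ⟨ψ.trans φ⟩⟩

/-- The bouquet of `m` loops at a single vertex. -/
def bouquet (m : ℕ) : Multigraph where
  V := Unit
  E := Fin m
  src _ := ()
  tgt _ := ()

lemma isEdgeConnected_bouquet (m c : ℕ) : (bouquet m).IsEdgeConnected c :=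
  isEdgeConnected_iff.2 fun _ ⟨_, hx⟩ huniv => absurd (eq_univ_of_forall fun _ => hx) huniv

lemma exists_isEdgeConnected_three (hN : 1 ≤ N) (hk : N ≤ 2 * k) :
    ∃ D : Multigraph, D.IsEdgeConnected 3 ∧ D.nV = N ∧ D.nE = N + k := by
  have hV : (bouquet (1 + k)).nV = 1 := rfl
  have hE : (bouquet (1 + k)).nE = 1 + k := Fintype.card_fin _
  obtain ⟨D, hD, hDV, hDE, -⟩ :=
    (isEdgeConnected_bouquet (1 + k) 3).exists_contraction_nV_eq hE (hN.trans' hV.le) hk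
  exact ⟨D, hD, hDV, hDE⟩

end Expansion

end Multigraph

namespace Multigraph

section SeriesColoring

variable {E C : Type} [Fintype E]

/-- The two-element sets of elements with the same colour. -/
def monochromaticPairs (cl : E → C) : Finset (Finset E) :=
  univ.filter fun F => #F = 2 ∧ ∀ e ∈ F, ∀ f ∈ F, cl e = cl f

lemma pair_mem_monochromaticPairs {cl : E → C} {e f : E} (hef : e ≠ f) :
    {e, f} ∈ monochromaticPairs cl ↔ cl e = cl f := by
  simpa [monochromaticPairs, card_pair hef] using! fun h : cl e = cl f => h.symm

lemma card_monochromaticPairs [Fintype C] (cl : E → C) :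
    #(monochromaticPairs cl) = ∑ c, (#(univ.filter fun e => cl e = c)).choose 2 := by
  have hunion : monochromaticPairs cl =
      univ.biUnion fun c => powersetCard 2 (univ.filter fun e => cl e = c) := by
    ext F
    simp only [monochromaticPairs, mem_filter, mem_univ, true_and, mem_biUnion, mem_powersetCard]
    constructor
    · rintro ⟨hF, hcl⟩
      obtain ⟨e, he⟩ := card_pos.1 (by omega : 0 < #F)
      exact ⟨cl e, fun f hf => by simpa using hcl f hf e he, hF⟩
    · rintro ⟨c, hc, hF⟩
      have hcl (e : E) (he : e ∈ F) : cl e = c := by simpa using hc he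
      exact ⟨hF, fun e he f hf => (hcl e he).trans (hcl f hf).symm⟩
  rw [hunion, card_biUnion]
  · simp only [card_powersetCard]
  · intro c _ c' _ hcc
    refine disjoint_left.2 fun F hF hF' => hcc ?_
    rw [mem_powersetCard] at hF hF'
    obtain ⟨e, he⟩ := card_pos.1 (by omega : 0 < #F)
    exact (mem_filter.1 (hF.1 he)).2.symm.trans (mem_filter.1 (hF'.1 he)).2

variable {G : Multigraph} {cl : G.E → C}

lemma sum_card_filter_eq_nE [Fintype C] (cl : G.E → C) :
    ∑ c, #(univ.filter fun e => cl e = c) = G.nE :=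
  (card_eq_sum_card_fiberwise fun _ _ => mem_coe.2 (mem_univ _)).symm

/-- A colouring of the edges in which any two edges of the same colour form a disconnection. -/
def IsSeriesColoring (G : Multigraph) (cl : G.E → C) : Prop :=
  ∀ e f, e ≠ f → cl e = cl f → G.Disconnects {e, f}

lemma IsSeriesColoring.monochromaticPairs_subset (hcl : G.IsSeriesColoring cl) :
    monochromaticPairs cl ⊆ univ.filter fun F => #F = 2 ∧ G.Disconnects F := by
  intro F hF
  have hF₂ : #F = 2 := (mem_filter.1 hF).2.1
  obtain ⟨e, f, hef, rfl⟩ := card_eq_two.1 hF₂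
  exact mem_filter.2 ⟨mem_univ _, hF₂, hcl e f hef ((pair_mem_monochromaticPairs hef).1 hF)⟩

lemma IsSeriesColoring.sum_choose_two_le_d [Fintype C] (hcl : G.IsSeriesColoring cl) :
    ∑ c, (#(univ.filter fun e => cl e = c)).choose 2 ≤ G.d 2 := by
  rw [← card_monochromaticPairs]
  exact card_le_card hcl.monochromaticPairs_subset

lemma IsSeriesColoring.d_two_eq_iff [Fintype C] (hcl : G.IsSeriesColoring cl) :
    G.d 2 = ∑ c, (#(univ.filter fun e => cl e = c)).choose 2 ↔
      ∀ e f, e ≠ f → G.Disconnects {e, f} → cl e = cl f := by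
  rw [← card_monochromaticPairs, d, eq_comm]
  constructor
  · intro h e f hef hd
    have hpairs := eq_of_subset_of_card_le hcl.monochromaticPairs_subset h.ge
    rw [← pair_mem_monochromaticPairs hef, hpairs]
    simpa [card_pair hef] using hd
  · refine fun h => (card_le_card hcl.monochromaticPairs_subset).antisymm
      (card_le_card fun F hF => ?_)
    obtain ⟨-, hF₂, hd⟩ := mem_filter.1 hF
    obtain ⟨e, f, hef, rfl⟩ := card_eq_two.1 hF₂
    exact (pair_mem_monochromaticPairs hef).2 (h e f hef hd)

end SeriesColoring

section Subdivide

variable {D : Multigraph} {w : D.E → ℕ} {f g : D.E}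

lemma chainNode_zero : chainNode D w f 0 = .inl (Quot.mk _ (D.src f)) := by
  simp [chainNode]

lemma chainNode_length : chainNode D w f (w f) = .inl (Quot.mk _ (D.tgt f)) := by
  by_cases h : w f = 0
  · rw [h, chainNode_zero]
    exact congrArg _ (Quot.sound ⟨f, h, rfl, rfl⟩)
  · simp [chainNode, h]

lemma chainNode_succ (i : Fin (w f - 1)) : chainNode D w f (i + 1) = .inr ⟨f, i⟩ := by
  have hi : (i : ℕ) + 1 < w f := by omega
  simp [chainNode, hi]

lemma chainNode_eq_chainNode_iff {s t : ℕ} (ht : 0 < t) (htw : t < w f) :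
    chainNode D w g s = chainNode D w f t ↔ g = f ∧ s = t := by
  refine ⟨fun h => ?_, by rintro ⟨rfl, rfl⟩; rfl⟩
  rw [chainNode, chainNode, dif_pos (⟨ht, htw⟩ : 0 < t ∧ t < w f)] at h
  split_ifs at h with hs
  · obtain ⟨rfl, h⟩ := Sigma.mk.inj (Sum.inr.inj h)
    have := Fin.mk.inj (eq_of_heq h)
    exact ⟨rfl, by omega⟩

lemma chainNode_mem_iff {A : Finset (subdivide D w).V} {a b : ℕ} (hab : a ≤ b) (hb : b ≤ w f)
    (h : ∀ i : Fin (w f), a ≤ i → i < b → ⟨f, i⟩ ∉ (subdivide D w).cutEdges A) :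
    chainNode D w f a ∈ A ↔ chainNode D w f b ∈ A := by
  induction b, hab using Nat.le_induction with
  | base => rfl
  | succ b hab ih =>
    rw [ih (by omega) fun i hi hib => h i hi (by omega)]
    exact notMem_cutEdges.1 (h ⟨b, hb⟩ hab b.lt_succ_self)

lemma chainNode_mem_iff_or {A : Finset (subdivide D w).V}
    (hA : Set.InjOn Sigma.fst ((subdivide D w).cutEdges A : Set (subdivide D w).E))
    {t : ℕ} (ht : t ≤ w f) :
    (chainNode D w f 0 ∈ A ↔ chainNode D w f t ∈ A) ∨
      (chainNode D w f t ∈ A ↔ chainNode D w f (w f) ∈ A) := by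
  by_cases h : ∃ i : Fin (w f), i < t ∧ ⟨f, i⟩ ∈ (subdivide D w).cutEdges A
  · obtain ⟨i, hit, hi⟩ := h
    refine .inr (chainNode_mem_iff ht le_rfl fun j hj _ hjA => ?_)
    obtain rfl : i = j := by simpa using hA hi hjA rfl
    omega
  · push Not at h
    exact .inl (chainNode_mem_iff t.zero_le ht fun i _ hi => h i hi)

lemma exists_inl_mem_iff {A : Finset (subdivide D w).V}
    (hA : Set.InjOn Sigma.fst ((subdivide D w).cutEdges A : Set (subdivide D w).E))
    (x : (subdivide D w).V) :
    ∃ v : D.V, (.inl (Quot.mk _ v) : (subdivide D w).V) ∈ A ↔ x ∈ A := by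
  obtain ⟨⟨v⟩⟩ | ⟨f, i⟩ := x
  · exact ⟨v, Iff.rfl⟩
  · have h := chainNode_mem_iff_or hA (f := f) (t := i + 1) (by omega)
    rw [chainNode_zero, chainNode_length, chainNode_succ] at h
    obtain h | h := h
    · exact ⟨_, h⟩
    · exact ⟨_, h.symm⟩

lemma IsEdgeConnected.not_disconnects_subdivide {c : ℕ} (hD : D.IsEdgeConnected c)
    {F : Finset (subdivide D w).E} (hF : Set.InjOn Sigma.fst (F : Set (subdivide D w).E))
    (hcard : #F < c) : ¬(subdivide D w).Disconnects F := by
  rw [disconnects_iff]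
  rintro ⟨A, ⟨x, hx⟩, huniv, hA⟩
  obtain ⟨y, hy⟩ : ∃ y, y ∉ A := by simpa [eq_univ_iff_forall] using huniv
  have hinj := hF.mono (coe_subset.2 hA)
  set B : Finset D.V :=
    univ.filter fun v => (.inl (Quot.mk _ v) : (subdivide D w).V) ∈ A with hB
  refine hD.not_disconnects (F := F.image Sigma.fst) (card_image_le.trans_lt hcard)
    (disconnects_iff.2 ⟨B, ?_, fun h => ?_, fun f hf => ?_⟩)
  · obtain ⟨v, hv⟩ := exists_inl_mem_iff hinj x
    exact ⟨v, by simpa [hB] using hv.2 hx⟩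
  · obtain ⟨v, hv⟩ := exists_inl_mem_iff hinj y
    exact hy (hv.1 (by simpa [hB] using Finset.ext_iff.1 h v))
  · by_contra hfF
    have hend := chainNode_mem_iff (A := A) (f := f) (Nat.zero_le _) le_rfl fun i _ _ hi =>
      hfF (mem_image_of_mem Sigma.fst (hA hi))
    rw [chainNode_zero, chainNode_length] at hend
    exact mem_cutEdges.1 hf (by simpa [hB] using hend)

lemma IsEdgeConnected.connected_subdivide {c : ℕ} (hD : D.IsEdgeConnected c) (hc : 0 < c)
    (w : D.E → ℕ) : (subdivide D w).Connected :=
  connected_iff_not_disconnects_empty.2 <|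
    hD.not_disconnects_subdivide (fun x hx => absurd hx (notMem_empty x)) (by simpa)

lemma disconnects_subdivide_of_lt {i j : Fin (w f)} (hij : i < j) :
    (subdivide D w).Disconnects {⟨f, i⟩, ⟨f, j⟩} := by
  set A : Finset (subdivide D w).V :=
    univ.filter fun x => ∃ t : ℕ, i < t ∧ t ≤ j ∧ x = chainNode D w f t
  have hmem (g : D.E) (s : ℕ) : chainNode D w g s ∈ A ↔ g = f ∧ i < s ∧ s ≤ j := by
    constructor
    · intro h
      obtain ⟨-, t, hit, htj, h⟩ := mem_filter.1 h
      obtain ⟨rfl, rfl⟩ := (chainNode_eq_chainNode_iff (by omega) (by omega)).1 h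
      exact ⟨rfl, hit, htj⟩
    · rintro ⟨rfl, his, hsj⟩
      exact mem_filter.2 ⟨mem_univ _, s, his, hsj, rfl⟩
  have hcut (g : D.E) (s : Fin (w g)) : ⟨g, s⟩ ∈ (subdivide D w).cutEdges A ↔
      ¬((g = f ∧ i < s.1 ∧ s.1 ≤ j) ↔ g = f ∧ i < s.1 + 1 ∧ s.1 + 1 ≤ j) :=
    mem_cutEdges.trans (not_congr (iff_congr (hmem g s) (hmem g (s + 1))))
  refine disconnects_of_cutEdges_subset (A := A) ⟨⟨f, i⟩, (hcut f i).2 (by grind)⟩ ?_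
  rintro ⟨g, s⟩ hs
  rw [hcut] at hs
  obtain rfl : g = f := by tauto
  have hs' : s = i ∨ s = j := by grind
  obtain rfl | rfl := hs'
  · exact mem_insert_self _ _
  · exact mem_insert_of_mem (mem_singleton_self _)

lemma isSeriesColoring_subdivide (D : Multigraph) (w : D.E → ℕ) :
    (subdivide D w).IsSeriesColoring Sigma.fst := by
  rintro ⟨f, i⟩ ⟨g, j⟩ hne hfg
  obtain rfl : f = g := hfg
  obtain hij | hji := lt_or_gt_of_ne fun h : i = j => hne (h ▸ rfl)
  · exact disconnects_subdivide_of_lt hij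
  · exact (disconnects_subdivide_of_lt hji).mono (pair_comm _ _).subset

lemma card_filter_sigma_fst (w : D.E → ℕ) (f : D.E) :
    #(univ.filter fun x : (subdivide D w).E => x.1 = f) = w f :=
  (Fintype.card_subtype _).symm.trans <|
    (Fintype.card_congr (Equiv.sigmaSubtype f)).trans (Fintype.card_fin _)

lemma IsEdgeConnected.d_two_subdivide (hD : D.IsEdgeConnected 3) (w : D.E → ℕ) :
    (subdivide D w).d 2 = ∑ f, (w f).choose 2 := by
  have h := (isSeriesColoring_subdivide D w).d_two_eq_iff.2 fun x y hxy hd => by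
    by_contra hne
    refine hD.not_disconnects_subdivide ?_ ((card_pair hxy).trans_lt (by norm_num)) hd
    rw [coe_pair]
    exact Set.injOn_pair.2 fun h => absurd h hne
  simpa only [card_filter_sigma_fst] using h

lemma nE_subdivide (w : D.E → ℕ) : (subdivide D w).nE = ∑ f, w f :=
  (Fintype.card_sigma (α := fun f => Fin (w f))).trans (by simp only [Fintype.card_fin])

lemma nV_subdivide_add (h : ZeroAcyclic D w) :
    (subdivide D w).nV + D.nE = D.nV + (subdivide D w).nE := by
  have hnV : (subdivide D w).nV = Fintype.card (Quot (zeroRel D w)) + ∑ f, (w f - 1) :=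
    Fintype.card_sum.trans <| congrArg _ <|
      (Fintype.card_sigma (α := fun f => Fin (w f - 1))).trans (by simp only [Fintype.card_fin])
  have hsum : ∑ f, (w f - 1) + D.nE = ∑ f, w f + #(univ.filter fun f => w f = 0) := by
    rw [nE, ← card_univ, card_eq_sum_ones, card_filter, ← sum_add_distrib, ← sum_add_distrib]
    exact sum_congr rfl fun f _ => by split_ifs <;> omega
  have hcard : Fintype.card (Quot (zeroRel D w)) + #(univ.filter fun f => w f = 0) = D.nV := h
  rw [hnV, nE_subdivide]
  omega

lemma zeroAcyclic_of_forall_pos (hw : ∀ f, 0 < w f) : ZeroAcyclic D w := by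
  have hcard : Fintype.card D.V = Fintype.card (Quot (zeroRel D w)) := by
    refine Fintype.card_of_bijective (f := Quot.mk _) ⟨fun u v huv => ?_, Quot.mk_surjective⟩
    have hrel (x y : D.V) (hxy : zeroRel D w x y) : x = y :=
      hxy.elim fun f hf => absurd hf.1 (hw f).ne'
    exact congrArg (Quot.lift id hrel) huv
  simp [ZeroAcyclic, hcard, (hw _).ne']

end Subdivide

end Multigraph

namespace Multigraph

section Walks

variable {G : Multigraph} {p q : List G.E} {u v x : G.V}

/-- `G.IsWalk p u v` says that the edges of `p` are, in this order, those of a walk from `u`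
to `v`. -/
inductive IsWalk (G : Multigraph) : List G.E → G.V → G.V → Prop
  | nil (u : G.V) : IsWalk G [] u u
  | cons {e : G.E} {p : List G.E} {u v x : G.V} :
    G.Joins e u v → IsWalk G p v x → IsWalk G (e :: p) u x

lemma Joins.isWalk {e : G.E} (h : G.Joins e u v) : G.IsWalk [e] u v := .cons h (.nil v)

lemma IsWalk.append (hp : G.IsWalk p u v) (hq : G.IsWalk q v x) : G.IsWalk (p ++ q) u x := by
  induction hp with
  | nil => exact hq
  | cons he _ ih => exact .cons he (ih hq)

lemma IsWalk.reverse (hp : G.IsWalk p u v) : G.IsWalk p.reverse v u := by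
  induction hp with
  | nil => exact .nil _
  | cons he _ ih =>
    rw [List.reverse_cons]
    exact ih.append he.symm.isWalk

lemma IsWalk.exists_nodes (hp : G.IsWalk p u v) : ∃ node : ℕ → G.V, node 0 = u ∧
    node p.length = v ∧ ∀ (i : ℕ) (hi : i < p.length), G.Joins p[i] (node i) (node (i + 1)) := by
  induction hp with
  | nil u => exact ⟨fun _ => u, rfl, rfl, fun i hi => absurd hi (Nat.not_lt_zero i)⟩
  | @cons _ _ u _ _ he _ ih =>
    obtain ⟨node, rfl, hlast, hnode⟩ := ih
    refine ⟨fun i => i.casesOn u node, rfl, hlast, fun i hi => ?_⟩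
    cases i with
    | zero => exact he
    | succ i => exact hnode i (Nat.lt_of_succ_lt_succ hi)

end Walks

section ChainDecomposition

/-- A decomposition of the edges of `G` into chains, one for each edge of `D`: the vertices of `D`
are mapped to vertices of `G`, and the edges of `G` with label `f` form a trail between the images
of the endpoints of `f`. The trail is empty if no edge has label `f`. -/
structure ChainDecomposition (D G : Multigraph) where
  node : D.V → G.V
  label : G.E → D.E
  exists_isWalk (f : D.E) : ∃ p : List G.E, p.Nodup ∧ (∀ x, x ∈ p ↔ label x = f) ∧
    G.IsWalk p (node (D.src f)) (node (D.tgt f))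

namespace ChainDecomposition

variable {D G H : Multigraph}

/-- The decomposition into single edges. -/
def refl (G : Multigraph) : ChainDecomposition G G where
  node := id
  label := id
  exists_isWalk f := ⟨[f], by simp, by simp, (joins_src_tgt f).isWalk⟩

/-- The chains of a graph obtained by contracting edges have length one or zero. -/
def ofContraction (φ : Contraction D G) : ChainDecomposition D G where
  node := φ.vMap
  label := φ.eMap
  exists_isWalk f := by
    by_cases hf : f ∈ Set.range φ.eMap
    · obtain ⟨x, rfl⟩ := hf
      exact ⟨[x], by simp, by simp, (φ.joins x).isWalk⟩
    · refine ⟨[], List.nodup_nil, fun x => ?_, φ.vMap_src_eq_vMap_tgt f hf ▸ .nil _⟩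
      simpa using fun h => hf ⟨x, h⟩

/-- If a loopless vertex `x` is incident with exactly two edges `e` and `f`, where `e` joins `x`
and `y`, then these edges form the chain of `f` over the graph in which `e` is contracted. -/
def ofContractEdge {e f : G.E} {x y : G.V} (hef : e ≠ f) (he : G.Joins e x y)
    (hcut : G.cutEdges {x} = {e, f}) (hloop : ∀ a, ¬G.Joins a x x) :
    ChainDecomposition (G.contract e) G where
  node := Quot.lift (fun v => if v = x then y else v) <| by
    have hxy : y ≠ x := fun h => hloop e (h ▸ he)
    rintro u v ⟨rfl, rfl⟩
    obtain ⟨rfl, rfl⟩ | ⟨rfl, rfl⟩ := he <;> simp [hxy]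
  label a := ⟨if a = e then f else a, by split_ifs with ha; exacts [hef.symm, ha]⟩
  exists_isWalk := by
    rintro ⟨a, ha⟩
    have hinc (b : G.E) : b = e ∨ b = f ↔ ¬(G.src b = x ↔ G.tgt b = x) := by
      simpa [mem_cutEdges] using! (Finset.ext_iff.1 hcut b).symm
    by_cases haf : a = f
    · subst haf
      by_cases hsrc : G.src a = x
      · have htgt : G.tgt a ≠ x := fun h => hloop a (.inl ⟨hsrc, h⟩)
        refine ⟨[e, a], by simp [hef], fun b => .trans (by grind) Subtype.mk_eq_mk.symm, ?_⟩
        simpa [contract, hsrc, htgt] using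
          IsWalk.cons he.symm (Joins.isWalk (.inl ⟨hsrc, rfl⟩ : G.Joins a x (G.tgt a)))
      · have htgt : G.tgt a = x := by
          by_contra h
          exact (hinc a).1 (.inr rfl) (iff_of_false hsrc h)
        refine ⟨[a, e], by simp [hef.symm], fun b => .trans (by grind) Subtype.mk_eq_mk.symm, ?_⟩
        simpa [contract, hsrc, htgt] using
          IsWalk.cons (.inl ⟨rfl, htgt⟩ : G.Joins a (G.src a) x) he.isWalk
    · have hends : ¬G.src a = x ∧ ¬G.tgt a = x := by
        have hiff : G.src a = x ↔ G.tgt a = x := by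
          by_contra h
          exact ((hinc a).2 h).elim ha haf
        have hnot : ¬(G.src a = x ∧ G.tgt a = x) := fun h => hloop a (.inl h)
        tauto
      refine ⟨[a], by simp, fun b => .trans (by grind) Subtype.mk_eq_mk.symm, ?_⟩
      simpa [contract, hends] using (joins_src_tgt a).isWalk

variable (φ : ChainDecomposition D G)

lemma exists_isWalk_of_isWalk {p : List G.E} {u v : G.V} (ψ : ChainDecomposition G H)
    (hp : p.Nodup) (hwalk : G.IsWalk p u v) : ∃ q : List H.E, q.Nodup ∧
      (∀ x, x ∈ q ↔ ψ.label x ∈ p) ∧ H.IsWalk q (ψ.node u) (ψ.node v) := by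
  induction hwalk with
  | nil u => exact ⟨[], List.nodup_nil, by simp, .nil _⟩
  | @cons e p u v _ he _ ih =>
    obtain ⟨hep, hp⟩ := List.nodup_cons.1 hp
    obtain ⟨q, hq, hmem, hqwalk⟩ := ih hp
    obtain ⟨r, hr, hrmem, hrwalk⟩ : ∃ r : List H.E, r.Nodup ∧ (∀ x, x ∈ r ↔ ψ.label x = e) ∧
        H.IsWalk r (ψ.node u) (ψ.node v) := by
      obtain ⟨r, hr, hrmem, hrwalk⟩ := ψ.exists_isWalk e
      obtain ⟨rfl, rfl⟩ | ⟨rfl, rfl⟩ := he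
      · exact ⟨r, hr, hrmem, hrwalk⟩
      · exact ⟨r.reverse, List.nodup_reverse.2 hr, by simpa, hrwalk.reverse⟩
    refine ⟨r ++ q, hr.append hq fun x hxr hxq => hep ?_, fun x => ?_, hrwalk.append hqwalk⟩
    · exact (hrmem x).1 hxr ▸ (hmem x).1 hxq
    · rw [List.mem_append, List.mem_cons, hrmem, hmem]

/-- The composition of two chain decompositions. -/
def trans (φ : ChainDecomposition D G) (ψ : ChainDecomposition G H) : ChainDecomposition D H where
  node := ψ.node ∘ φ.node
  label := φ.label ∘ ψ.label
  exists_isWalk f := by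
    obtain ⟨p, hp, hmem, hwalk⟩ := φ.exists_isWalk f
    obtain ⟨q, hq, hqmem, hqwalk⟩ := ψ.exists_isWalk_of_isWalk hp hwalk
    exact ⟨q, hq, fun x => (hqmem x).trans (hmem _), hqwalk⟩

/-- The length of the chain of an edge of `D`. -/
def weight (f : D.E) : ℕ := #(univ.filter fun x => φ.label x = f)

lemma sum_weight : ∑ f, φ.weight f = G.nE := sum_card_filter_eq_nE φ.label

lemma weight_pos (h : Function.Surjective φ.label) (f : D.E) : 0 < φ.weight f := by
  obtain ⟨x, hx⟩ := h f
  exact card_pos.2 ⟨x, by simpa using hx⟩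

lemma length_eq_weight {p : List G.E} {f : D.E} (hp : p.Nodup)
    (hmem : ∀ x, x ∈ p ↔ φ.label x = f) : p.length = φ.weight f := by
  rw [← List.toFinset_card_of_nodup hp, weight]
  congr 1
  ext x
  simpa using hmem x

lemma weight_ofContraction_eq_zero_iff (φ : Contraction D G) {f : D.E} :
    (ofContraction φ).weight f = 0 ↔ f ∉ Set.range φ.eMap := by
  rw [weight, card_eq_zero, filter_eq_empty_iff]
  simp [ofContraction]

lemma weight_ofContraction_le_one (φ : Contraction D G) (f : D.E) :
    (ofContraction φ).weight f ≤ 1 := by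
  refine card_le_one.2 fun x hx y hy => φ.eMap.injective ?_
  exact (mem_filter.1 hx).2.trans (mem_filter.1 hy).2.symm

lemma zeroAcyclic_ofContraction (φ : Contraction D G) (h : D.nE + G.nV = D.nV + G.nE) :
    ZeroAcyclic D (ofContraction φ).weight := by
  have hzero : #(univ.filter fun f => (ofContraction φ).weight f = 0) + G.nE = D.nE := by
    have hrange : (univ.filter fun f => (ofContraction φ).weight f = 0) =
        (univ.map φ.eMap)ᶜ := by
      ext f
      simp [weight_ofContraction_eq_zero_iff]
    rw [hrange, card_compl, card_map, card_univ]
    exact Nat.sub_add_cancel (Fintype.card_le_of_embedding φ.eMap)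
  have hquot : Fintype.card (Quot (zeroRel D (ofContraction φ).weight)) = G.nV := by
    refine Fintype.card_of_bijective (f := Quot.lift φ.vMap ?_) ⟨?_, fun x => ?_⟩
    · rintro u v ⟨f, hf, rfl, rfl⟩
      exact φ.vMap_src_eq_vMap_tgt f ((weight_ofContraction_eq_zero_iff φ).1 hf)
    · rintro ⟨u⟩ ⟨v⟩ huv
      set A : Finset D.V := univ.filter fun x =>
        Quot.mk (zeroRel D (ofContraction φ).weight) x = Quot.mk _ u with hA
      have huA := φ.fiber A (fun e he => ?_) u v huv
      · simpa [hA, eq_comm] using huA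
      · by_contra hrange
        have hmk : Quot.mk (zeroRel D (ofContraction φ).weight) (D.src e) = Quot.mk _ (D.tgt e) :=
          Quot.sound ⟨e, (weight_ofContraction_eq_zero_iff φ).2 hrange, rfl, rfl⟩
        exact mem_cutEdges.1 he (by simp [hA, hmk])
    · obtain ⟨v, rfl⟩ := φ.vMap_surjective x
      exact ⟨Quot.mk _ v, rfl⟩
  change _ + _ = D.nV
  omega

lemma exists_nodes (f : D.E) : ∃ (edge : Fin (φ.weight f) ≃ {x // φ.label x = f})
    (node : ℕ → G.V), node 0 = φ.node (D.src f) ∧ node (φ.weight f) = φ.node (D.tgt f) ∧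
      ∀ i, G.Joins (edge i) (node i) (node (i + 1)) := by
  obtain ⟨p, hp, hmem, hwalk⟩ := φ.exists_isWalk f
  obtain ⟨node, hfirst, hlast, hnode⟩ := hwalk.exists_nodes
  rw [φ.length_eq_weight hp hmem] at hlast
  let edge := (finCongr (φ.length_eq_weight hp hmem).symm).trans <|
    (hp.getEquiv p).trans (Equiv.subtypeEquivRight hmem)
  exact ⟨edge, node, hfirst, hlast, fun i => hnode i _⟩

/-- The vertex of `G` at a node of the subdivision, where `node f j` is the `j`-th vertex of the
chain of `f`. -/
def vertexOf (node : D.E → ℕ → G.V) (hsrc : ∀ f, node f 0 = φ.node (D.src f))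
    (htgt : ∀ f, node f (φ.weight f) = φ.node (D.tgt f)) : (subdivide D φ.weight).V → G.V :=
  Sum.elim (Quot.lift φ.node (by rintro u v ⟨f, hf, rfl, rfl⟩; rw [← hsrc, ← htgt, hf]))
    fun x => node x.1 (x.2 + 1)

lemma vertexOf_chainNode {node : D.E → ℕ → G.V} (hsrc : ∀ f, node f 0 = φ.node (D.src f))
    (htgt : ∀ f, node f (φ.weight f) = φ.node (D.tgt f)) {f : D.E} {j : ℕ}
    (hj : j ≤ φ.weight f) : φ.vertexOf node hsrc htgt (chainNode D φ.weight f j) = node f j := by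
  by_cases h : 0 < j ∧ j < φ.weight f
  · simp [chainNode, h, vertexOf, Nat.sub_add_cancel h.1]
  · obtain rfl | rfl : j = 0 ∨ j = φ.weight f := by omega
    · rw [chainNode_zero, hsrc]
      rfl
    · rw [chainNode_length, htgt]
      rfl

theorem isIso_subdivide (hz : ZeroAcyclic D φ.weight) (hE : D.nE + G.nV = D.nV + G.nE)
    (hG : G.Connected) [Nonempty G.E] : IsIso G (subdivide D φ.weight) := by
  choose edge node hsrc htgt hnode using φ.exists_nodes
  let eMap : (subdivide D φ.weight).E ≃ G.E :=
    (Equiv.sigmaCongrRight edge).trans (Equiv.sigmaFiberEquiv φ.label)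
  set vMap := φ.vertexOf node hsrc htgt
  have hjoins (y : (subdivide D φ.weight).E) : G.Joins (eMap y)
      (vMap ((subdivide D φ.weight).src y)) (vMap ((subdivide D φ.weight).tgt y)) := by
    obtain ⟨f, i⟩ := y
    have h := hnode f i
    rw [← φ.vertexOf_chainNode hsrc htgt i.2.le, ← φ.vertexOf_chainNode hsrc htgt i.2] at h
    exact h
  have hsurj : Function.Surjective vMap := fun x => by
    obtain ⟨e, z, he⟩ := hG.exists_joins x
    obtain ⟨y, rfl⟩ := eMap.surjective e
    obtain ⟨hx, -⟩ | ⟨-, hx⟩ := he <;> obtain ⟨h₁, h₂⟩ | ⟨h₁, h₂⟩ := hjoins y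
    · exact ⟨_, h₁.symm.trans hx⟩
    · exact ⟨_, h₁.symm.trans hx⟩
    · exact ⟨_, h₂.symm.trans hx⟩
    · exact ⟨_, h₂.symm.trans hx⟩
  have hcard : (subdivide D φ.weight).nV = G.nV := by
    have := nV_subdivide_add hz
    rw [nE_subdivide, φ.sum_weight] at this
    omega
  have hbij : Function.Bijective vMap := (Fintype.bijective_iff_surjective_and_card _).2
    ⟨hsurj, hcard⟩
  let vEquiv := Equiv.ofBijective vMap hbij
  refine ⟨⟨vEquiv.symm, eMap.symm, fun e => ?_⟩⟩
  obtain ⟨y, rfl⟩ := eMap.surjective e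
  simp only [Equiv.symm_apply_apply, Equiv.eq_symm_apply]
  obtain ⟨h₁, h₂⟩ | ⟨h₁, h₂⟩ := hjoins y
  · exact .inl ⟨h₁.symm, h₂.symm⟩
  · exact .inr ⟨h₂.symm, h₁.symm⟩

lemma isWeakSubdivision (h : Function.Surjective φ.label) (hE : D.nE + G.nV = D.nV + G.nE)
    (hG : G.Connected) [Nonempty G.E] : IsWeakSubdivision G D φ.weight :=
  have hz := zeroAcyclic_of_forall_pos (φ.weight_pos h)
  ⟨hz, φ.isIso_subdivide hz hE hG⟩

end ChainDecomposition

end ChainDecomposition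

end Multigraph

namespace Multigraph

section SeriesColoring

variable {G : Multigraph} {C : Type} {k : ℕ}

lemma IsSeriesColoring.of_contract {e f : G.E} {cl : (G.contract e).E → C}
    (hcl : (G.contract e).IsSeriesColoring cl) (hef : e ≠ f) (hdisc : G.Disconnects {e, f})
    (h : G.Disconnects {e} ∨ ¬G.Disconnects {f}) :
    G.IsSeriesColoring fun g => if hg : g = e then cl ⟨f, hef.symm⟩ else cl ⟨g, hg⟩ := by
  have hcontract (a b : (G.contract e).E) (hab : a ≠ b) (hclab : cl a = cl b) :
      G.Disconnects {a.1, b.1} :=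
    (Contraction.contractEdge G e).disconnects_pair_iff.2 (hcl a b hab hclab)
  have hnew (g : G.E) (hg : g ≠ e) (hclg : cl ⟨f, hef.symm⟩ = cl ⟨g, hg⟩) :
      G.Disconnects {e, g} := by
    rcases h with he | hf
    · exact he.mono (by simp)
    · by_cases hfg : f = g
      · exact hfg ▸ hdisc
      · exact hdisc.pair_trans (hcontract _ _ (fun h => hfg (congrArg (·.1) h)) hclg) hf hg.symm
  intro a b hab hclab
  by_cases ha : a = e <;> by_cases hb : b = e
  · exact absurd (ha.trans hb.symm) hab
  · subst ha
    exact hnew b hb (by simpa [hb] using hclab)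
  · subst hb
    exact (hnew a ha (by simpa [ha] using hclab.symm)).mono (pair_comm _ _).subset
  · simp only [ha, hb, dite_false] at hclab
    exact hcontract _ _ (fun h => hab (congrArg (·.1) h)) hclab

lemma Disconnects.exists_pair {e f : G.E} (hef : e ≠ f) (h : G.Disconnects {e, f})
    (hG : G.Connected) : ∃ e f, e ≠ f ∧ G.Disconnects {e, f} ∧ G.src e ≠ G.tgt e ∧
      (G.Disconnects {e} ∨ ¬G.Disconnects {f}) := by
  have hempty := connected_iff_not_disconnects_empty.1 hG
  by_cases hf : G.Disconnects {f}
  · exact ⟨f, e, hef.symm, h.mono (pair_comm _ _).subset,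
      fun hloop => hempty (of_insert_loop hf hloop), .inl hf⟩
  · exact ⟨e, f, hef, h, fun hloop => hf (h.of_insert_loop hloop), .inr hf⟩

lemma Connected.exists_isSeriesColoring [Fintype C] (hG : G.Connected) (hE : G.nE = G.nV + k)
    (hk : 1 ≤ k) (hC : 3 * k ≤ Fintype.card C) : ∃ cl : G.E → C, G.IsSeriesColoring cl := by
  induction hm : G.nE generalizing G with
  | zero => omega
  | succ m ih =>
    by_cases hpair : ∃ e f, e ≠ f ∧ G.Disconnects {e, f}
    · obtain ⟨e, f, hef, hdisc⟩ := hpair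
      obtain ⟨e, f, hef, hdisc, hloop, h⟩ := hdisc.exists_pair hef hG
      have := nV_contract_add_one hloop
      have := nE_contract_add_one e
      obtain ⟨cl, hcl⟩ := ih ((Contraction.contractEdge G e).connected_iff.1 hG) (by omega)
        (by omega)
      exact ⟨_, hcl.of_contract hef hdisc h⟩
    · push Not at hpair
      have hV := nV_pos_of_nE_pos (by omega : 0 < G.nE)
      have hle := (isEdgeConnected_three_of_forall_pair (by omega) hpair).nV_le hk hE
      obtain ⟨cl⟩ : Nonempty (G.E ↪ C) := Function.Embedding.nonempty_of_card_le
        ((by omega : G.nE ≤ 3 * k).trans hC)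
      exact ⟨cl, fun e f hef h => absurd (cl.injective h) hef⟩

end SeriesColoring

section Cubic

variable {G : Multigraph} {C : Type} {k : ℕ}

lemma IsEdgeConnected.exists_cutEdges_singleton_eq_pair (hG : G.IsEdgeConnected 2) (hk : 1 ≤ k)
    (hE : G.nE = G.nV + k) (hV : 2 * k < G.nV) : ∃ x e f y, e ≠ f ∧ G.Joins e x y ∧
      G.cutEdges {x} = {e, f} ∧ ∀ a, ¬G.Joins a x x := by
  obtain ⟨x, hx⟩ : ∃ x, G.deg x < 3 := by
    by_contra! h
    have := mul_nV_le_two_mul_nE h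
    omega
  have hcut := hG.le_card_cutEdges_singleton (by omega) x
  have hdeg := card_cutEdges_singleton_add_two_mul x
  obtain ⟨e, f, hef, hpair⟩ := card_eq_two.1 (by omega : #(G.cutEdges {x}) = 2)
  obtain ⟨y, hy⟩ := exists_joins_of_mem_cutEdges_singleton (x := x) (e := e) (by simp [hpair])
  refine ⟨x, e, f, y, hef, hy, hpair, fun a ha => ?_⟩
  have : 0 < #(univ.filter fun e => G.Joins e x x) := card_pos.2 ⟨a, by simpa using ha⟩
  omega

lemma isEdgeConnected_two_of_surjective [Nontrivial C] {cl : G.E → C}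
    (hcl : ∀ e f, e ≠ f → G.Disconnects {e, f} → cl e = cl f)
    (hsurj : Function.Surjective cl) : G.IsEdgeConnected 2 := by
  intro F hF
  by_contra! hcard
  have : Nonempty G.E := hsurj.nonempty
  obtain ⟨e, hFe⟩ := card_le_one_iff_subset_singleton.1 (Nat.le_of_lt_succ hcard)
  obtain ⟨c, hc⟩ := exists_ne (cl e)
  obtain ⟨f, rfl⟩ := hsurj c
  have hef : e ≠ f := fun h => hc (h ▸ rfl)
  exact hc (hcl e f hef (hF.mono (hFe.trans (by simp)))).symm

/- Contracting an edge at a vertex of degree two shortens a chain of the decomposition, and the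
remaining vertices of degree two lie inside chains; a bridgeless graph without them is cubic. -/
lemma IsEdgeConnected.exists_chainDecomposition [Fintype C] {cl : G.E → C}
    (hG : G.IsEdgeConnected 2) (hk : 1 ≤ k) (hE : G.nE = G.nV + k)
    (hC : Fintype.card C = 3 * k) (hcl : ∀ e f, e ≠ f → (G.Disconnects {e, f} ↔ cl e = cl f))
    (hsurj : Function.Surjective cl) : ∃ D : Multigraph, D.IsEdgeConnected 3 ∧ D.nV = 2 * k ∧
      D.nE = D.nV + k ∧ ∃ φ : ChainDecomposition D G, Function.Surjective φ.label := by
  induction hm : G.nE generalizing G with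
  | zero => omega
  | succ m ih =>
    rcases le_or_gt G.nV (2 * k) with hV | hV
    · have hcard : 3 * k ≤ G.nE := hC ▸ Fintype.card_le_of_surjective cl hsurj
      have hinj : Function.Injective cl :=
        ((Fintype.bijective_iff_surjective_and_card cl).2
          ⟨hsurj, (by omega : G.nE = 3 * k).trans hC.symm⟩).1
      have hpair (e f : G.E) (hef : e ≠ f) : ¬G.Disconnects {e, f} :=
        fun h => hef (hinj ((hcl e f hef).1 h))
      exact ⟨G, isEdgeConnected_three_of_forall_pair (by omega) hpair, by omega, hE, .refl G,
        Function.surjective_id⟩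
    · obtain ⟨x, e, f, y, hef, hjoins, hcut, hloop⟩ :=
        hG.exists_cutEdges_singleton_eq_pair hk hE hV
      have hnV := nV_contract_add_one (e := e) fun h => hloop e (by grind [Joins])
      have hnE := nE_contract_add_one e
      have hclef : cl e = cl f := (hcl e f hef).1 <|
        disconnects_of_cutEdges_subset (hcut ▸ insert_nonempty e {f}) hcut.subset
      have hcl' (a b : (G.contract e).E) (hab : a ≠ b) :
          (G.contract e).Disconnects {a, b} ↔ cl a.1 = cl b.1 :=
        (Contraction.contractEdge G e).disconnects_pair_iff.symm.trans
          (hcl a.1 b.1 fun h => hab (Subtype.ext h))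
      have hsurj' : Function.Surjective fun a : (G.contract e).E => cl a.1 := fun c => by
        obtain ⟨a, rfl⟩ := hsurj c
        by_cases ha : a = e
        · exact ⟨⟨f, hef.symm⟩, hclef.symm.trans (congrArg cl ha.symm)⟩
        · exact ⟨⟨a, ha⟩, rfl⟩
      obtain ⟨D, hD, hDV, hDE, φ, hφ⟩ := ih ((Contraction.contractEdge G e).isEdgeConnected hG)
        (by omega) hcl' hsurj' (by omega)
      exact ⟨D, hD, hDV, hDE, φ.trans (.ofContractEdge hef hjoins hcut hloop),
        hφ.comp fun a => ⟨a.1, Subtype.ext (if_neg a.2)⟩⟩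

end Cubic

end Multigraph

namespace Multigraph

section Minimizers

variable {G H D : Multigraph} {w : D.E → ℕ} {n k : ℕ}

lemma _root_.IsWeakSubdivision.d_two_eq (h : IsWeakSubdivision G D w) (hD : D.IsEdgeConnected 3) :
    G.d 2 = ∑ f, (w f).choose 2 := by
  rw [h.2.d_eq, hD.d_two_subdivide]

lemma _root_.IsWeakSubdivision.nE_eq (h : IsWeakSubdivision G D w) : G.nE = ∑ f, w f := by
  obtain ⟨φ⟩ := h.2
  rw [← nE_subdivide]
  exact Fintype.card_congr φ.eMap

lemma IsEdgeConnected.d_two_subdivide_moveWeight_lt (hD : D.IsEdgeConnected 3) {e f : D.E}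
    (h : w f + 2 ≤ w e) : (subdivide D (moveWeight w e f)).d 2 < (subdivide D w).d 2 := by
  rw [hD.d_two_subdivide, hD.d_two_subdivide]
  exact sum_choose_two_moveWeight_lt w h

lemma _root_.BalancedWeights.sum_choose_two_le_d_two (hw : BalancedWeights w)
    (hD : D.nE = 3 * k) (hk : 1 ≤ k) (hsum : ∑ f, w f = G.nE) (hG : memG G n (n + k)) :
    ∑ f, (w f).choose 2 ≤ G.d 2 := by
  obtain ⟨hV, hE, hconn⟩ := hG
  obtain ⟨cl, hcl⟩ := hconn.exists_isSeriesColoring (C := Fin (3 * k)) (by rw [hE, hV]) hk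
    (Fintype.card_fin _).ge
  exact (hw.sum_choose_two_le (hD.trans (Fintype.card_fin _).symm)
    (hsum.trans (sum_card_filter_eq_nE cl).symm)).trans hcl.sum_choose_two_le_d

lemma exists_balancedWeights_memG_subdivide (hk : 1 ≤ k) (hn : 2 * k ≤ n) :
    ∃ (D : Multigraph) (w : D.E → ℕ), memDk k D ∧ BalancedWeights w ∧
      memG (subdivide D w) n (n + k) := by
  obtain ⟨D, hD, hV, hE⟩ := exists_isEdgeConnected_three (by omega : 1 ≤ 2 * k) le_rfl
  have : Nonempty D.E := Fintype.card_pos_iff.1 (by omega : 0 < D.nE)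
  obtain ⟨w, hw, hsum⟩ := exists_balancedWeights D.E (n + k)
  have hpos := hw.pos_of_card_le_sum (by rw [hsum]; omega : D.nE ≤ _)
  have hV' := nV_subdivide_add (zeroAcyclic_of_forall_pos hpos)
  have hE' := (nE_subdivide w).trans hsum
  exact ⟨D, w, hD.memDk hk (by omega) hV, hw, by omega, hE',
    hD.connected_subdivide (by omega) w⟩

lemma IsEdgeConnected.exists_balanced_isWeakSubdivision (hG : G.IsEdgeConnected 3) (hk : 1 ≤ k)
    (hE : G.nE = G.nV + k) : ∃ (D : Multigraph) (w : D.E → ℕ),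
      memDk k D ∧ IsWeakSubdivision G D w ∧ BalancedWeights w := by
  obtain ⟨D, hD, hDV, hDE, ⟨φ⟩⟩ := hG.exists_contraction_nV_eq hE (hG.nV_le hk hE) le_rfl
  have hrank : D.nE + G.nV = D.nV + G.nE := by omega
  have hz := ChainDecomposition.zeroAcyclic_ofContraction φ hrank
  have : Nonempty G.E := Fintype.card_pos_iff.1 (by omega : 0 < G.nE)
  refine ⟨D, _, hD.memDk hk (by omega) hDV,
    ⟨hz, ChainDecomposition.isIso_subdivide _ hz hrank (hG.connected (by omega))⟩, fun e f => ?_⟩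
  have := ChainDecomposition.weight_ofContraction_le_one φ e
  omega

lemma IsSeriesColoring.disconnects_iff_and_surjective_of_d_two_le {E C : Type} [Fintype E]
    [Fintype C] {cl : G.E → C} {w : E → ℕ} (hcl : G.IsSeriesColoring cl) (hw : BalancedWeights w)
    (hcard : Fintype.card E = Fintype.card C) (hsum : ∑ f, w f = G.nE)
    (hC : Fintype.card C ≤ G.nE) (hle : G.d 2 ≤ ∑ f, (w f).choose 2) :
    (∀ e f, e ≠ f → (G.Disconnects {e, f} ↔ cl e = cl f)) ∧ Function.Surjective cl := by
  set s : C → ℕ := fun c => #(univ.filter fun e => cl e = c)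
  have hsum_s : ∑ c, s c = G.nE := sum_card_filter_eq_nE cl
  have hws := hw.sum_choose_two_le hcard (hsum.trans hsum_s.symm)
  have heq : G.d 2 = ∑ c, (s c).choose 2 := (hle.trans hws).antisymm hcl.sum_choose_two_le_d
  have hbal : BalancedWeights s :=
    hw.of_sum_choose_two_le hcard (hsum.trans hsum_s.symm) (heq.symm.trans_le hle)
  refine ⟨fun e f hef => ⟨hcl.d_two_eq_iff.1 heq e f hef, hcl e f hef⟩, fun c => ?_⟩
  obtain ⟨e, he⟩ := card_pos.1 (hbal.pos_of_card_le_sum (hC.trans_eq hsum_s.symm) c)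
  exact ⟨e, (mem_filter.1 he).2⟩

lemma Connected.exists_balanced_isWeakSubdivision {E : Type} [Fintype E] {w : E → ℕ}
    (hG : G.Connected) (hE : G.nE = G.nV + k) (hk : 1 ≤ k) (hV : 2 * k ≤ G.nV)
    (hw : BalancedWeights w) (hcard : Fintype.card E = 3 * k) (hsum : ∑ f, w f = G.nE)
    (hle : G.d 2 ≤ ∑ f, (w f).choose 2) : ∃ (D : Multigraph) (w : D.E → ℕ),
      memDk k D ∧ IsWeakSubdivision G D w ∧ BalancedWeights w := by
  have hC : Fintype.card (Fin (3 * k)) = 3 * k := Fintype.card_fin _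
  have : Nontrivial (Fin (3 * k)) := Fintype.one_lt_card_iff_nontrivial.1 (by omega)
  have : Nonempty G.E := Fintype.card_pos_iff.1 (by omega : 0 < G.nE)
  obtain ⟨cl, hcl⟩ := hG.exists_isSeriesColoring hE hk hC.ge
  obtain ⟨hiff, hsurj⟩ := hcl.disconnects_iff_and_surjective_of_d_two_le hw (hcard.trans hC.symm)
    hsum (by omega) hle
  have hbridge := isEdgeConnected_two_of_surjective (fun e f hef => (hiff e f hef).1) hsurj
  obtain ⟨D, hD, hDV, hDE, φ, hφ⟩ := hbridge.exists_chainDecomposition hk hE hC hiff hsurj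
  have hsub := φ.isWeakSubdivision hφ (by omega) hG
  exact ⟨D, φ.weight, hD.memDk hk hDE hDV, hsub,
    hw.of_sum_choose_two_le (hcard.trans (by change _ = D.nE; omega))
      (hsum.trans φ.sum_weight.symm) ((hsub.d_two_eq hD).symm.trans_le hle)⟩

lemma exists_balanced_isWeakSubdivision_of_forall_d_two_le (hk : 1 ≤ k) (hG : memG G n (n + k))
    (hmin : ∀ H : Multigraph, memG H n (n + k) → G.d 2 ≤ H.d 2) : ∃ (D : Multigraph) (w : D.E → ℕ),
      memDk k D ∧ IsWeakSubdivision G D w ∧ BalancedWeights w := by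
  obtain ⟨hV, hE, hconn⟩ := hG
  rcases le_or_gt (2 * k) n with hn | hn
  · obtain ⟨D, w, hD, hw, hmem⟩ := exists_balancedWeights_memG_subdivide hk hn
    exact hconn.exists_balanced_isWeakSubdivision (by omega) hk (by omega) hw
      (nE_eq_of_memDk hD) (by rw [hE, ← hmem.2.1, nE_subdivide])
      ((hmin _ hmem).trans_eq (IsEdgeConnected.d_two_subdivide hD.2.2.1 w))
  · have hpos : 0 < G.nV := nV_pos_of_nE_pos (by omega)
    obtain ⟨H, hH, hHV, hHE⟩ := exists_isEdgeConnected_three (by omega : 1 ≤ n) hn.le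
    have hH₀ : H.d 2 = 0 := (d_eq_zero_iff (by omega)).2 hH
    have hG₀ : G.d 2 = 0 :=
      Nat.le_zero.1 ((hmin H ⟨hHV, hHE, hH.connected (by omega)⟩).trans_eq hH₀)
    exact ((d_eq_zero_iff (by omega)).1 hG₀).exists_balanced_isWeakSubdivision hk (by omega)

end Minimizers

end Multigraph

theorem d2_minimizers_general (n k : ℕ) (hk : 1 ≤ k) :
    (∀ G : Multigraph, memG G n (n + k) →
      ((∀ H : Multigraph, memG H n (n + k) → G.d 2 ≤ H.d 2) ↔
        ∃ (D : Multigraph) (w : D.E → ℕ),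
          memDk k D ∧ IsWeakSubdivision G D w ∧ BalancedWeights w)) ∧
    (∀ (D : Multigraph) (w : D.E → ℕ), D.IsEdgeConnected 3 →
      ∀ e f : D.E, w f + 2 ≤ w e →
        (subdivide D (moveWeight w e f)).d 2 < (subdivide D w).d 2) := by
  refine ⟨fun G hG => ⟨?_, ?_⟩, fun D w hD e f => hD.d_two_subdivide_moveWeight_lt⟩
  · exact Multigraph.exists_balanced_isWeakSubdivision_of_forall_d_two_le hk hG
  · rintro ⟨D, w, hD, hsub, hw⟩ H hH
    have hD₃ : D.IsEdgeConnected 3 := hD.2.2.1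
    have hsum : ∑ f, w f = H.nE := hsub.nE_eq.symm.trans (hG.2.1.trans hH.2.1.symm)
    rw [hsub.d_two_eq hD₃]
    exact hw.sum_choose_two_le_d_two (Multigraph.nE_eq_of_memDk hD) hk hsum hH

/-- (a) G ∈ 𝒢_{n,n+k} minimizes d₂ iff G is a balanced weak subdivision of
some D ∈ 𝒟_k; (b) moving one edge from a chain to another chain shorter by at least 2
strictly decreases d₂. -/
theorem d2_minimizers (n k : ℕ) (hk : 1 ≤ k) :
    (∀ G : Multigraph, memG G n (n + k) →
      ((∀ H : Multigraph, memG H n (n + k) → G.d 2 ≤ H.d 2) ↔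
        ∃ (D : Multigraph) (w : D.E → ℕ),
          memDk k D ∧ IsWeakSubdivision G D w ∧ BalancedWeights w)) ∧
    (∀ (D : Multigraph) (w : D.E → ℕ), memDk k D → ZeroAcyclic D w →
      ¬ BalancedWeights w →
      ∀ e f : D.E, w f + 2 ≤ w e →
        (subdivide D (moveWeight w e f)).d 2 < (subdivide D w).d 2) :=
  ⟨(d2_minimizers_general n k hk).1, fun D w hD _ _ =>
    (d2_minimizers_general n k hk).2 D w hD.2.2.1⟩
end
end

section
/- Let m > k ≥ 2, let D ∈ D_k have only trivial 3-bonds, and consider a balanced weighting of D together with the implied graph G ∈ B_m(D). (a) If D has balanced π^v-values, then G minimizes d_3 within B_m(D). (b) If moreover m ≥ 2k, then G minimizes d_3 within B_m(D) if and only if D has balanced π^v-values. -/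
open Classical Finset

noncomputable section

/-!
Three edges of a weak subdivision disconnect it exactly when two of them lie on a common chain, or
when they lie on the three chains at a vertex of `D`; the second case uses that the stars are the
only disconnecting triples of `D`. Counting the complement, `d₃` equals `(m choose 3)` minus the
third elementary symmetric function of the chain lengths, plus the sum over the vertices `u` of the
product of the three chain lengths at `u`.

A balanced weighting takes the value `b + 1` on a set `H` of edges and `b` elsewhere, where `b` and
`#H` are determined by `m`. So only the last sum varies, and it equals
`∑ u, b ^ (3 - h u) * (b + 1) ^ h u`, where `h u` is the degree of `u` in `H`. The summand is a
convex function of `h u` and `∑ u, h u = 2 * #H` is fixed, so balanced degrees minimize the sum; by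
strict convexity no other degrees do when `b ≠ 0`. When `b = 0`, the condition `2 * k ≤ m` puts the
average degree in `[2, 3]`, where the summand has a strict corner at `2`.

That a balanced `H` of every size exists follows from Petersen's theorem: a perfect matching `M`
together with a maximal matching of the 2-regular graph `Mᶜ` covers all sizes up to one half of the
edges, and complements give the others. The resulting weighting is admissible since its zero-weight
edges form a matching.
-/

namespace Multigraph

variable {G : Multigraph}

/-! ### Degrees inside an edge set -/

lemma sum_degIn_eq (S : Finset G.E) (C : Finset G.V) :
    ∑ v ∈ C, degIn G S v =
      #(S.filter fun e => G.src e ∈ C) + #(S.filter fun e => G.tgt e ∈ C) := by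
  simp only [degIn, sum_add_distrib]
  congr 1 <;> convert sum_card_fiberwise_eq_card_filter S C _

lemma sum_degIn (S : Finset G.E) : ∑ v, degIn G S v = 2 * #S := by
  rw [sum_degIn_eq]
  simp only [mem_univ, filter_true, two_mul]

lemma degIn_univ (v : G.V) : degIn G univ v = G.deg v := rfl

lemma degIn_mono {S T : Finset G.E} (h : S ⊆ T) (v : G.V) : degIn G S v ≤ degIn G T v :=
  Nat.add_le_add (card_le_card (filter_subset_filter _ h)) (card_le_card (filter_subset_filter _ h))

lemma degIn_union {S T : Finset G.E} (h : Disjoint S T) (v : G.V) :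
    degIn G (S ∪ T) v = degIn G S v + degIn G T v := by
  simp only [degIn, filter_union, card_union_of_disjoint (disjoint_filter_filter h)]
  ring

lemma degIn_compl_add (S : Finset G.E) (v : G.V) :
    degIn G Sᶜ v + degIn G S v = G.deg v := by
  rw [← degIn_union disjoint_compl_left, union_comm, union_compl, degIn_univ]

lemma card_le_sum_degIn {S : Finset G.E} {C : Finset G.V}
    (h : ∀ e ∈ S, G.src e ∈ C ∨ G.tgt e ∈ C) : #S ≤ ∑ v ∈ C, degIn G S v := by
  calc #S = #(S.filter fun e => G.src e ∈ C ∨ G.tgt e ∈ C) := by rw [filter_true_of_mem h]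
    _ ≤ #(S.filter fun e => G.src e ∈ C) + #(S.filter fun e => G.tgt e ∈ C) := by
      rw [filter_or]; exact card_union_le _ _
    _ = ∑ v ∈ C, degIn G S v := (sum_degIn_eq S C).symm

/-! ### Cuts and disconnections -/

lemma disconnects_iff_exists_coloring {F : Finset G.E} :
    G.Disconnects F ↔ ∃ c : G.V → Prop, (∃ u, c u) ∧ (∃ v, ¬ c v) ∧
      ∀ e ∉ F, (c (G.src e) ↔ c (G.tgt e)) := by
  constructor
  · intro hdisc
    simp only [Disconnects, ConnOn, not_forall] at hdisc
    obtain ⟨u, v, huv⟩ := hdisc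
    refine ⟨Relation.ReflTransGen (G.stepOn (univ \ F)) u, ⟨u, .refl⟩, ⟨v, huv⟩, fun e he => ?_⟩
    have heF : e ∈ univ \ F := mem_sdiff.2 ⟨mem_univ e, he⟩
    exact ⟨fun h => h.tail ⟨e, heF, .inl ⟨rfl, rfl⟩⟩, fun h => h.tail ⟨e, heF, .inr ⟨rfl, rfl⟩⟩⟩
  · rintro ⟨c, ⟨u, hu⟩, ⟨v, hv⟩, hc⟩ hconn
    have hreach : ∀ x, Relation.ReflTransGen (G.stepOn (univ \ F)) u x → c x := by
      intro x hx
      induction hx with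
      | refl => exact hu
      | tail _ hstep ih =>
        obtain ⟨e, he, ⟨rfl, rfl⟩ | ⟨rfl, rfl⟩⟩ := hstep
        · exact (hc e (mem_sdiff.1 he).2).1 ih
        · exact (hc e (mem_sdiff.1 he).2).2 ih
    exact hv (hreach v (hconn u v))

lemma disconnects_iff_exists_cutEdges_subset {F : Finset G.E} :
    G.Disconnects F ↔ ∃ A : Finset G.V, A.Nonempty ∧ A ≠ univ ∧ G.cutEdges A ⊆ F := by
  rw [disconnects_iff_exists_coloring]
  constructor
  · rintro ⟨c, ⟨u, hu⟩, ⟨v, hv⟩, hc⟩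
    refine ⟨univ.filter c, ⟨u, by simpa using hu⟩, fun h => hv ?_, fun e he => ?_⟩
    · exact (mem_filter.1 (h.symm ▸ mem_univ v)).2
    · by_contra heF
      have := hc e heF
      simp only [cutEdges, mem_filter, mem_univ, true_and] at he
      tauto
  · rintro ⟨A, ⟨u, hu⟩, hA, hAF⟩
    obtain ⟨v, hv⟩ : ∃ v, v ∉ A := by simpa [eq_univ_iff_forall] using hA
    refine ⟨(· ∈ A), ⟨u, hu⟩, ⟨v, hv⟩, fun e he => ?_⟩
    have := mt (@hAF e) he
    simp only [cutEdges, mem_filter, mem_univ, true_and] at this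
    tauto

lemma disconnects_cutEdges {A : Finset G.V} (hne : A.Nonempty) (huniv : A ≠ univ) :
    G.Disconnects (G.cutEdges A) :=
  disconnects_iff_exists_cutEdges_subset.2 ⟨A, hne, huniv, Subset.rfl⟩

lemma d_add_card_not_disconnects (G : Multigraph) (i : ℕ) :
    G.d i + #(univ.filter fun F : Finset G.E => #F = i ∧ ¬ G.Disconnects F) =
      (Fintype.card G.E).choose i := by
  rw [d, ← filter_filter, ← filter_filter, card_filter_add_card_filter_not,
    univ_filter_card_eq, card_powersetCard, card_univ]

lemma card_cutEdges_add (A : Finset G.V) :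
    #(G.cutEdges A) + 2 * #(univ.filter fun e => G.src e ∈ A ∧ G.tgt e ∈ A) =
      ∑ v ∈ A, G.deg v := by
  simp only [← degIn_univ, sum_degIn_eq, cutEdges, card_filter, mul_sum, ← sum_add_distrib]
  refine sum_congr rfl fun e _ => ?_
  by_cases hs : G.src e ∈ A <;> by_cases ht : G.tgt e ∈ A <;> simp [hs, ht]

/-- No edge of `G` is a loop. -/
def Loopless (G : Multigraph) : Prop := ∀ e : G.E, G.src e ≠ G.tgt e

/-- The set of edges incident to the vertex `u`; a loop at `u` is listed once. -/
def star (G : Multigraph) (u : G.V) : Finset G.E :=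
  univ.filter fun e => G.src e = u ∨ G.tgt e = u

lemma mem_star {u : G.V} {e : G.E} : e ∈ G.star u ↔ G.src e = u ∨ G.tgt e = u := by
  simp only [star, mem_filter, mem_univ, true_and]

lemma degIn_eq_card_star_inter {S : Finset G.E} (hS : ∀ e ∈ S, G.src e ≠ G.tgt e) (u : G.V) :
    degIn G S u = #(G.star u ∩ S) := by
  have hdisj : Disjoint (S.filter fun e => G.src e = u) (S.filter fun e => G.tgt e = u) :=
    disjoint_filter.2 fun e he hsrc htgt => hS e he (hsrc.trans htgt.symm)
  rw [degIn, ← card_union_of_disjoint hdisj, ← filter_or, star, filter_inter, univ_inter]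

lemma Loopless.card_star (h : G.Loopless) (u : G.V) : #(G.star u) = G.deg u := by
  rw [← degIn_univ, degIn_eq_card_star_inter fun e _ => h e, inter_univ]

lemma Loopless.cutEdges_singleton (h : G.Loopless) (u : G.V) : G.cutEdges {u} = G.star u := by
  ext e
  have := h e
  simp only [cutEdges, mem_filter, mem_univ, true_and, mem_singleton, mem_star]
  grind

/-! ### Petersen's theorem -/

/-- The underlying simple graph of `G`, forgetting loops and multiplicities, to which
Tutte's theorem on perfect matchings applies. -/
def toSimpleGraph (G : Multigraph) : SimpleGraph G.V := SimpleGraph.fromRel G.Adj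

lemma toSimpleGraph_adj_of_ends {e : G.E} (he : G.src e ≠ G.tgt e) :
    G.toSimpleGraph.Adj (G.src e) (G.tgt e) :=
  ⟨he, .inl ⟨e, .inl ⟨rfl, rfl⟩⟩⟩

lemma exists_edge_of_toSimpleGraph_adj {u v : G.V} (h : G.toSimpleGraph.Adj u v) :
    ∃ e, s(G.src e, G.tgt e) = s(u, v) := by
  obtain ⟨-, ⟨e, he⟩ | ⟨e, he⟩⟩ := h
  · exact ⟨e, Sym2.eq_iff.2 he⟩
  · exact ⟨e, Sym2.eq_iff.2 he.symm⟩

section Components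

variable {U : Set G.V}

/-- The vertices of `G` lying in the connected component `C` of the simple graph of `G` with
the vertices `U` removed. -/
def componentVerts (C : ((⊤ : G.toSimpleGraph.Subgraph).deleteVerts U).coe.ConnectedComponent) :
    Finset G.V :=
  (Subtype.val '' C.supp).toFinset

variable {C C' : ((⊤ : G.toSimpleGraph.Subgraph).deleteVerts U).coe.ConnectedComponent}

lemma card_componentVerts : #(componentVerts C) = C.supp.ncard := by
  rw [componentVerts, ← Set.ncard_eq_toFinset_card',
    Set.ncard_image_of_injective _ Subtype.val_injective]

lemma mem_componentVerts {v : G.V} :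
    v ∈ componentVerts C ↔ ∃ h, SimpleGraph.connectedComponentMk _ ⟨v, h⟩ = C := by
  simp [componentVerts]

lemma notMem_of_mem_componentVerts {v : G.V} (hv : v ∈ componentVerts C) : v ∉ U := by
  obtain ⟨h, -⟩ := mem_componentVerts.1 hv
  exact h.2

lemma componentVerts_unique {v : G.V} (hv : v ∈ componentVerts C) (hv' : v ∈ componentVerts C') :
    C = C' := by
  obtain ⟨_, rfl⟩ := mem_componentVerts.1 hv
  obtain ⟨_, rfl⟩ := mem_componentVerts.1 hv'
  rfl

lemma mem_componentVerts_of_adj {u v : G.V} (hu : u ∈ componentVerts C)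
    (huv : G.toSimpleGraph.Adj u v) (hv : v ∉ U) : v ∈ componentVerts C := by
  obtain ⟨huU, rfl⟩ := mem_componentVerts.1 hu
  refine mem_componentVerts.2 ⟨⟨trivial, hv⟩, SimpleGraph.ConnectedComponent.sound ?_⟩
  refine SimpleGraph.Adj.reachable ?_
  simpa [hv, huU.2] using huv.symm

lemma ends_of_mem_cutEdges_componentVerts {e : G.E} (he : e ∈ G.cutEdges (componentVerts C)) :
    (G.src e ∈ componentVerts C ∧ G.tgt e ∈ U) ∨ (G.src e ∈ U ∧ G.tgt e ∈ componentVerts C) := by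
  simp only [cutEdges, mem_filter, mem_univ, true_and] at he
  have hne : G.src e ≠ G.tgt e := by
    rintro h
    rw [h] at he
    tauto
  have hadj := toSimpleGraph_adj_of_ends hne
  rcases he with ⟨hs, ht⟩ | ⟨hs, ht⟩
  · exact .inl ⟨hs, by_contra fun h => ht (mem_componentVerts_of_adj hs hadj h)⟩
  · exact .inr ⟨by_contra fun h => hs (mem_componentVerts_of_adj ht hadj.symm h), ht⟩

lemma disjoint_cutEdges_componentVerts (hne : C ≠ C') :
    Disjoint (G.cutEdges (componentVerts C)) (G.cutEdges (componentVerts C')) := by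
  refine disjoint_left.2 fun e he he' => hne ?_
  rcases ends_of_mem_cutEdges_componentVerts he with ⟨h, -⟩ | ⟨hU, h⟩ <;>
    rcases ends_of_mem_cutEdges_componentVerts he' with ⟨h', -⟩ | ⟨hU', h'⟩
  · exact componentVerts_unique h h'
  · exact absurd hU' (notMem_of_mem_componentVerts h)
  · exact absurd hU (notMem_of_mem_componentVerts h')
  · exact componentVerts_unique h h'

end Components

lemma three_mul_card_verts (hcub : ∀ v, G.deg v = 3) :
    3 * Fintype.card G.V = 2 * Fintype.card G.E := by
  simpa [degIn_univ, hcub, mul_comm] using sum_degIn (univ : Finset G.E)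

lemma Bridgeless.three_le_card_cutEdges (hbr : G.Bridgeless) (hcub : ∀ v, G.deg v = 3)
    {A : Finset G.V} (hA : Odd #A) : 3 ≤ #(G.cutEdges A) := by
  have huniv : A ≠ univ := by
    rintro rfl
    have := three_mul_card_verts hcub
    rw [Nat.odd_iff, card_univ] at hA
    lia
  have hne_one : #(G.cutEdges A) ≠ 1 := by
    intro h
    obtain ⟨e, he⟩ := card_eq_one.1 h
    have hdisc := disconnects_cutEdges (card_pos.1 hA.pos) huniv
    exact hbr e (by rwa [he] at hdisc)
  have hsum := G.card_cutEdges_add A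
  simp only [hcub, sum_const, smul_eq_mul] at hsum
  rw [Nat.odd_iff] at hA
  lia

lemma Bridgeless.loopless (hbr : G.Bridgeless) (hcub : ∀ v, G.deg v = 3) : G.Loopless := by
  intro e he
  have hcut := hbr.three_le_card_cutEdges hcub (A := {G.src e}) (by simp)
  have hsum := G.card_cutEdges_add {G.src e}
  have hloop : 0 < #(univ.filter fun f => G.src f ∈ ({G.src e} : Finset G.V) ∧
      G.tgt f ∈ ({G.src e} : Finset G.V)) := card_pos.2 ⟨e, by simp [he]⟩
  rw [sum_singleton, hcub] at hsum
  lia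

lemma Bridgeless.not_isTutteViolator (hbr : G.Bridgeless) (hcub : ∀ v, G.deg v = 3)
    (U : Set G.V) : ¬ G.toSimpleGraph.IsTutteViolator U := by
  rw [SimpleGraph.IsTutteViolator, not_lt]
  set odds := ((⊤ : G.toSimpleGraph.Subgraph).deleteVerts U).coe.oddComponents with hodds
  set cuts := odds.toFinset.biUnion fun C => G.cutEdges (componentVerts C) with hcuts
  have hlower : 3 * odds.ncard ≤ #cuts := by
    rw [hcuts, card_biUnion fun _ _ _ _ h => disjoint_cutEdges_componentVerts h,
      Set.ncard_eq_toFinset_card', mul_comm, ← smul_eq_mul]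
    refine card_nsmul_le_sum _ _ _ fun C hC => hbr.three_le_card_cutEdges hcub ?_
    rwa [Set.mem_toFinset, hodds, Set.mem_ofPred_eq, ← card_componentVerts] at hC
  have hupper : #cuts ≤ 3 * U.ncard := by
    calc #cuts ≤ ∑ v ∈ U.toFinset, degIn G cuts v := by
          refine card_le_sum_degIn fun e he => ?_
          obtain ⟨C, -, he⟩ := mem_biUnion.1 he
          rcases ends_of_mem_cutEdges_componentVerts he with h | h
          · exact .inr (Set.mem_toFinset.2 h.2)
          · exact .inl (Set.mem_toFinset.2 h.1)
      _ ≤ ∑ v ∈ U.toFinset, 3 :=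
          sum_le_sum fun v _ => (degIn_mono (subset_univ _) v).trans (hcub v).le
      _ = 3 * U.ncard := by
          rw [sum_const, smul_eq_mul, mul_comm, Set.ncard_eq_toFinset_card']
  lia

lemma exists_degIn_eq_one_of_isPerfectMatching {P : G.toSimpleGraph.Subgraph}
    (hP : P.IsPerfectMatching) : ∃ M : Finset G.E, ∀ v, degIn G M v = 1 := by
  have hedge : ∀ p : P.edgeSet, ∃ e, s(G.src e, G.tgt e) = p.1 := by
    rintro ⟨⟨u, v⟩, huv⟩
    exact exists_edge_of_toSimpleGraph_adj (P.adj_sub huv)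
  choose g hg using hedge
  refine ⟨univ.image g, fun u => ?_⟩
  have hloop : ∀ e ∈ univ.image g, G.src e ≠ G.tgt e := by
    rintro e he
    obtain ⟨p, -, rfl⟩ := mem_image.1 he
    have hp : s(G.src (g p), G.tgt (g p)) ∈ P.edgeSet := hg p ▸ p.2
    exact (P.adj_sub hp).ne
  obtain ⟨v, huv, huniq⟩ := hP.1 (hP.2 u)
  rw [degIn_eq_card_star_inter hloop, card_eq_one]
  refine ⟨g ⟨s(u, v), huv⟩, eq_singleton_iff_unique_mem.2 ⟨?_, fun e he => ?_⟩⟩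
  · have := Sym2.eq_iff.1 (hg ⟨s(u, v), huv⟩)
    exact mem_inter.2 ⟨mem_star.2 (by tauto), mem_image_of_mem g (mem_univ _)⟩
  · obtain ⟨hu, he⟩ := mem_inter.1 he
    obtain ⟨⟨p, hp⟩, -, rfl⟩ := mem_image.1 he
    have hu : u ∈ p := by
      have hmem : u ∈ s(G.src (g ⟨p, hp⟩), G.tgt (g ⟨p, hp⟩)) :=
        Sym2.mem_iff.2 ((mem_star.1 hu).imp Eq.symm Eq.symm)
      rwa [hg] at hmem
    obtain ⟨x, rfl⟩ := Sym2.mem_iff_exists.1 hu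
    simp only [huniq x hp]

theorem Bridgeless.exists_perfectMatching (hbr : G.Bridgeless) (hcub : ∀ v, G.deg v = 3) :
    ∃ M : Finset G.E, ∀ v, degIn G M v = 1 :=
  let ⟨_, hP⟩ := SimpleGraph.tutte.2 (hbr.not_isTutteViolator hcub)
  exists_degIn_eq_one_of_isPerfectMatching hP

/-! ### Matchings and equitable edge sets -/

lemma degIn_singleton_le_one {e : G.E} (he : G.src e ≠ G.tgt e) (v : G.V) :
    degIn G {e} v ≤ 1 := by
  rw [degIn_eq_card_star_inter (by simpa using he)]
  exact (card_le_card inter_subset_right).trans (card_singleton e).le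

lemma degIn_singleton_ne_zero_iff {e : G.E} {v : G.V} :
    degIn G {e} v ≠ 0 ↔ G.src e = v ∨ G.tgt e = v := by
  by_cases hs : G.src e = v <;> by_cases ht : G.tgt e = v <;>
    simp [degIn, filter_singleton, hs, ht]

lemma Loopless.exists_maximal_matching (hl : G.Loopless) (S : Finset G.E) :
    ∃ N ⊆ S, IsMatchingIn G N ∧
      ∀ e ∈ S, degIn G N (G.src e) ≠ 0 ∨ degIn G N (G.tgt e) ≠ 0 := by
  obtain ⟨N, hN, hmax⟩ := exists_max_image (S.powerset.filter (IsMatchingIn G)) card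
    ⟨∅, by simp [IsMatchingIn, degIn]⟩
  simp only [mem_filter, mem_powerset] at hN hmax
  refine ⟨N, hN.1, hN.2, fun e he => ?_⟩
  by_contra! huncov
  have heN : Disjoint {e} N := by
    refine disjoint_singleton_left.2 fun h => ?_
    have := degIn_mono (singleton_subset_iff.2 h) (G.src e)
    have := degIn_singleton_ne_zero_iff.2 (.inl rfl : G.src e = G.src e ∨ G.tgt e = G.src e)
    lia
  have hmatch : IsMatchingIn G ({e} ∪ N) := by
    intro v
    rw [degIn_union heN]
    have h1 := degIn_singleton_le_one (hl e) v
    have h2 := hN.2 v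
    by_cases hv : degIn G {e} v = 0
    · lia
    · rcases degIn_singleton_ne_zero_iff.1 hv with rfl | rfl <;> lia
  have := hmax _ ⟨union_subset (singleton_subset_iff.2 he) hN.1, hmatch⟩
  rw [card_union_of_disjoint heN, card_singleton] at this
  lia

lemma card_filter_degIn_ne_zero {N : Finset G.E} (hN : IsMatchingIn G N) :
    #(univ.filter fun v => degIn G N v ≠ 0) = 2 * #N := by
  rw [← sum_degIn, card_filter]
  refine sum_congr rfl fun v _ => ?_
  have := hN v
  split_ifs <;> lia

lemma Loopless.exists_large_matching (hl : G.Loopless) {S : Finset G.E} {c : ℕ}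
    (hc : ∀ v, degIn G S v ≤ c) : ∃ N ⊆ S, IsMatchingIn G N ∧ #S ≤ 2 * c * #N := by
  obtain ⟨N, hNS, hN, hcov⟩ := hl.exists_maximal_matching S
  refine ⟨N, hNS, hN, ?_⟩
  calc #S ≤ ∑ v ∈ univ.filter fun v => degIn G N v ≠ 0, degIn G S v :=
        card_le_sum_degIn fun e he => by simpa only [mem_filter, mem_univ, true_and] using hcov e he
    _ ≤ #(univ.filter fun v => degIn G N v ≠ 0) * c :=
        sum_le_card_nsmul _ _ _ fun v _ => hc v
    _ = 2 * c * #N := by rw [card_filter_degIn_ne_zero hN]; ring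

-- A perfect matching `M` supplies a third of the edges; since `Mᶜ` is 2-regular, a maximal
-- matching of `Mᶜ` adds at least a quarter of the rest, which takes us past one half.
lemma Bridgeless.exists_equitable_of_two_mul_le (hbr : G.Bridgeless) (hcub : ∀ v, G.deg v = 3)
    {s : ℕ} (hs : 2 * s ≤ Fintype.card G.E) :
    ∃ S : Finset G.E, #S = s ∧ BalancedWeights (degIn G S) := by
  obtain ⟨M, hM⟩ := hbr.exists_perfectMatching hcub
  have hcardV : Fintype.card G.V = 2 * #M := by simpa [hM] using sum_degIn M
  have hcardE := three_mul_card_verts hcub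
  rcases le_or_gt s #M with hsM | hsM
  · obtain ⟨S, hSM, hS⟩ := exists_subset_card_eq hsM
    refine ⟨S, hS, fun u v => ?_⟩
    have := degIn_mono hSM u
    have := hM u
    lia
  · have hMc : ∀ v, degIn G Mᶜ v ≤ 2 := fun v => by
      have := degIn_compl_add M v
      have := hM v
      have := hcub v
      lia
    obtain ⟨N, hNM, hN, hcardN⟩ := (hbr.loopless hcub).exists_large_matching hMc
    rw [card_compl] at hcardN
    obtain ⟨S, hSN, hS⟩ := exists_subset_card_eq (show s - #M ≤ #N by lia)
    have hdisj : Disjoint M S := disjoint_compl_right.mono_right (hSN.trans hNM)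
    refine ⟨M ∪ S, by rw [card_union_of_disjoint hdisj]; lia, fun u v => ?_⟩
    rw [degIn_union hdisj, degIn_union hdisj, hM, hM]
    have := (degIn_mono hSN u).trans (hN u)
    lia

theorem Bridgeless.exists_equitable (hbr : G.Bridgeless) (hcub : ∀ v, G.deg v = 3) {s : ℕ}
    (hs : s ≤ Fintype.card G.E) : ∃ S : Finset G.E, #S = s ∧ BalancedWeights (degIn G S) := by
  rcases le_or_gt (2 * s) (Fintype.card G.E) with hhalf | hhalf
  · exact hbr.exists_equitable_of_two_mul_le hcub hhalf
  · obtain ⟨S, hS, hbal⟩ :=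
      hbr.exists_equitable_of_two_mul_le hcub (s := Fintype.card G.E - s) (by lia)
    refine ⟨Sᶜ, by rw [card_compl]; lia, fun u v => ?_⟩
    have := hbal v u
    have hu := degIn_compl_add S u
    have hv := degIn_compl_add S v
    rw [hcub] at hu hv
    lia

end Multigraph

/-! ### Contracting a matching -/

lemma IsMatchingIn.injOn_tgt {D : Multigraph} {S : Finset D.E} (hS : IsMatchingIn D S) :
    Set.InjOn D.tgt S := by
  intro e he f hf h
  have := (Nat.le_add_left _ _).trans (hS (D.tgt f))
  exact card_le_one.1 this e (mem_filter.2 ⟨he, h⟩) f (mem_filter.2 ⟨hf, rfl⟩)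

lemma IsMatchingIn.src_ne_tgt {D : Multigraph} {S : Finset D.E} (hS : IsMatchingIn D S)
    {e f : D.E} (he : e ∈ S) (hf : f ∈ S) : D.src e ≠ D.tgt f := by
  intro h
  have := hS (D.tgt f)
  have hsrc : 0 < #(S.filter fun g => D.src g = D.tgt f) := card_pos.2 ⟨e, mem_filter.2 ⟨he, h⟩⟩
  have htgt : 0 < #(S.filter fun g => D.tgt g = D.tgt f) := card_pos.2 ⟨f, mem_filter.2 ⟨hf, rfl⟩⟩
  rw [degIn] at this
  lia

lemma IsMatchingIn.exists_retraction {D : Multigraph} {S : Finset D.E} (hS : IsMatchingIn D S) :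
    ∃ ρ : D.V → D.V, (∀ e ∈ S, ρ (D.tgt e) = D.src e) ∧ ∀ v ∉ S.image D.tgt, ρ v = v := by
  have hinj : Function.Injective fun e : S => D.tgt e := fun e f h =>
    Subtype.ext (hS.injOn_tgt e.2 f.2 h)
  refine ⟨Function.extend (fun e : S => D.tgt e) (fun e : S => D.src e) id, fun e he => ?_,
    fun v hv => ?_⟩
  · exact hinj.extend_apply _ _ ⟨e, he⟩
  · exact Function.extend_apply' _ _ _ fun ⟨e, he⟩ => hv (mem_image.2 ⟨e, e.2, he⟩)

lemma zeroAcyclic_of_isMatchingIn {D : Multigraph} {w : D.E → ℕ}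
    (hZ : IsMatchingIn D (univ.filter fun e => w e = 0)) : ZeroAcyclic D w := by
  set Z := univ.filter fun e => w e = 0
  have hsrc : ∀ e ∈ Z, D.src e ∉ Z.image D.tgt := fun e he h => by
    obtain ⟨f, hf, hfe⟩ := mem_image.1 h
    exact hZ.src_ne_tgt he hf hfe.symm
  obtain ⟨ρ, hρtgt, hρ⟩ := hZ.exists_retraction
  have hρrel : ∀ u v, zeroRel D w u v → ρ u = ρ v := by
    rintro _ _ ⟨e, he, rfl, rfl⟩
    have heZ : e ∈ Z := mem_filter.2 ⟨mem_univ e, he⟩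
    rw [hρtgt e heZ, hρ _ (hsrc e heZ)]
  have hbij : Function.Bijective
      fun v : {v // v ∈ (Z.image D.tgt)ᶜ} => Quot.mk (zeroRel D w) v.1 := by
    constructor
    · rintro ⟨u, hu⟩ ⟨v, hv⟩ huv
      have : ρ u = ρ v := congrArg (Quot.lift ρ hρrel) huv
      rw [hρ u (mem_compl.1 hu), hρ v (mem_compl.1 hv)] at this
      exact Subtype.ext this
    · rintro ⟨v⟩
      by_cases hv : v ∈ Z.image D.tgt
      · obtain ⟨e, he, rfl⟩ := mem_image.1 hv
        exact ⟨⟨D.src e, mem_compl.2 (hsrc e he)⟩, Quot.sound ⟨e, (mem_filter.1 he).2, rfl, rfl⟩⟩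
      · exact ⟨⟨v, mem_compl.2 hv⟩, rfl⟩
  rw [ZeroAcyclic, ← Fintype.card_of_bijective hbij, Fintype.card_coe,
    ← card_image_of_injOn hZ.injOn_tgt, card_compl_add_card]

/-! ### Disconnections of weak subdivisions -/

section Subdivide

variable {D : Multigraph} {w : D.E → ℕ}

lemma chainNode_zero (e : D.E) : chainNode D w e 0 = .inl (Quot.mk _ (D.src e)) := by
  simp [chainNode]

lemma chainNode_last (e : D.E) : chainNode D w e (w e) = .inl (Quot.mk _ (D.tgt e)) := by
  rw [chainNode, dif_neg (by lia)]
  split_ifs with h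
  · exact congrArg Sum.inl (Quot.sound ⟨e, h, rfl, rfl⟩)
  · rfl

lemma chainNode_succ (e : D.E) (x : Fin (w e - 1)) :
    chainNode D w e (x + 1) = .inr ⟨e, x⟩ := by
  rw [chainNode, dif_pos (by lia)]
  rfl

lemma chainNode_cases (e : D.E) {p : ℕ} (hp : p ≤ w e) :
    p = 0 ∨ p = w e ∨ ∃ x : Fin (w e - 1), p = x + 1 := by
  by_cases h : 0 < p ∧ p < w e
  · exact .inr (.inr ⟨⟨p - 1, by lia⟩, by simp only; lia⟩)
  · lia

lemma exists_chain_coloring {c : D.V → Prop} {κ : D.E → ℕ → Prop}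
    (hsrc : ∀ e, κ e 0 ↔ c (D.src e)) (htgt : ∀ e, κ e (w e) ↔ c (D.tgt e)) :
    ∃ c' : (subdivide D w).V → Prop, (∀ u, c' (.inl (Quot.mk _ u)) ↔ c u) ∧
      ∀ e p, p ≤ w e → (c' (chainNode D w e p) ↔ κ e p) := by
  have hc : ∀ u v, zeroRel D w u v → c u = c v := by
    rintro _ _ ⟨e, he, rfl, rfl⟩
    rw [← hsrc, ← htgt, he]
  refine ⟨Sum.elim (Quot.lift c hc) fun x => κ x.1 (x.2 + 1), fun u => Iff.rfl, fun e p hp => ?_⟩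
  obtain rfl | rfl | ⟨x, rfl⟩ := chainNode_cases e hp
  · rw [chainNode_zero, hsrc]; rfl
  · rw [chainNode_last, htgt]; rfl
  · rw [chainNode_succ]; rfl

variable {F : Finset (Σ e : D.E, Fin (w e))}

/-- `c` is constant across the edges of the weak subdivision lying outside `F`. -/
def RespectsOutside (F : Finset (Σ e : D.E, Fin (w e))) (c : (subdivide D w).V → Prop) : Prop :=
  ∀ (e : D.E) (i : Fin (w e)), (⟨e, i⟩ : Σ e : D.E, Fin (w e)) ∉ F →
    (c (chainNode D w e i) ↔ c (chainNode D w e (i + 1)))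

lemma disconnects_subdivide_iff : (subdivide D w).Disconnects F ↔
    ∃ c, (∃ x, c x) ∧ (∃ y, ¬ c y) ∧ RespectsOutside F c :=
  Multigraph.disconnects_iff_exists_coloring.trans <|
    exists_congr fun _ => and_congr_right' (and_congr_right' Sigma.forall)

lemma disconnects_subdivide_of_two_mem_chain {e : D.E} {i j : Fin (w e)} (hij : i < j)
    (hi : (⟨e, i⟩ : Σ e : D.E, Fin (w e)) ∈ F) (hj : (⟨e, j⟩ : Σ e : D.E, Fin (w e)) ∈ F) :
    (subdivide D w).Disconnects F := by
  obtain ⟨c, -, hc⟩ := exists_chain_coloring (w := w) (c := fun _ => False)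
    (κ := fun f p => f = e ∧ i.val < p ∧ p ≤ j.val) (by simp) (by grind)
  refine disconnects_subdivide_iff.2
    ⟨c, ⟨chainNode D w e j, ?_⟩, ⟨chainNode D w e 0, ?_⟩, fun f l hl => ?_⟩
  · exact (hc e j j.2.le).2 ⟨rfl, hij, le_rfl⟩
  · exact fun h => absurd ((hc e 0 (Nat.zero_le _)).1 h).2.1 (Nat.not_lt_zero _)
  · rw [hc f l l.2.le, hc f (l + 1) l.2]
    refine and_congr_right fun hf => ?_
    subst hf
    have hli : l ≠ i := by rintro rfl; exact hl hi
    have hlj : l ≠ j := by rintro rfl; exact hl hj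
    lia

lemma disconnects_subdivide_of_image (h : D.Disconnects (F.image Sigma.fst)) :
    (subdivide D w).Disconnects F := by
  obtain ⟨c, ⟨u, hu⟩, ⟨v, hv⟩, hcF⟩ := Multigraph.disconnects_iff_exists_coloring.1 h
  let passed (e : D.E) (p : ℕ) : Prop := ∃ i : Fin (w e), ⟨e, i⟩ ∈ F ∧ i.val < p
  obtain ⟨c', hinl, hc'⟩ := exists_chain_coloring (w := w) (c := c)
    (κ := fun e p => if passed e p then c (D.tgt e) else c (D.src e))
    (fun e => by simp [passed]) fun e => by
      split_ifs with hpassed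
      · rfl
      · refine hcF e fun he => ?_
        obtain ⟨⟨_, i⟩, hi, rfl⟩ := mem_image.1 he
        exact hpassed ⟨i, hi, i.2⟩
  refine disconnects_subdivide_iff.2
    ⟨c', ⟨_, (hinl u).2 hu⟩, ⟨_, mt (hinl v).1 hv⟩, fun e i hi => ?_⟩
  rw [hc' e i i.2.le, hc' e (i + 1) i.2]
  have : passed e i ↔ passed e (i + 1) := by
    refine exists_congr fun j => and_congr_right fun hj => ?_
    have : j ≠ i := by rintro rfl; exact hi hj
    lia
  simp only [this]

lemma RespectsOutside.chainNode_iff {c : (subdivide D w).V → Prop} (hc : RespectsOutside F c)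
    {e : D.E} {p q : ℕ} (hpq : p ≤ q) (hq : q ≤ w e)
    (hF : ∀ i : Fin (w e), p ≤ i → i < q → (⟨e, i⟩ : Σ e : D.E, Fin (w e)) ∉ F) :
    c (chainNode D w e p) ↔ c (chainNode D w e q) := by
  induction q, hpq using Nat.le_induction with
  | base => rfl
  | succ q hpq ih =>
    rw [ih (by lia) fun i hpi hiq => hF i hpi (by lia)]
    exact hc e ⟨q, hq⟩ (hF ⟨q, hq⟩ hpq q.lt_succ_self)

lemma RespectsOutside.exists_base {c : (subdivide D w).V → Prop} (hc : RespectsOutside F c)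
    (hinj : Set.InjOn Sigma.fst (F : Set (Σ e : D.E, Fin (w e)))) (x : (subdivide D w).V) :
    ∃ u : D.V, c x ↔ c (.inl (Quot.mk _ u)) := by
  rcases x with u | ⟨e, x⟩
  · obtain ⟨u, rfl⟩ := Quot.exists_rep u
    exact ⟨u, Iff.rfl⟩
  rw [← chainNode_succ]
  by_cases hbefore : ∃ i : Fin (w e), (⟨e, i⟩ : Σ e : D.E, Fin (w e)) ∈ F ∧ i.val < x + 1
  · obtain ⟨i, hi, hix⟩ := hbefore
    refine ⟨D.tgt e, chainNode_last (w := w) e ▸ hc.chainNode_iff (by lia) le_rfl ?_⟩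
    intro j hxj _ hj
    obtain rfl : i = j := by simpa using hinj hi hj rfl
    lia
  · push Not at hbefore
    refine ⟨D.src e,
      chainNode_zero (w := w) e ▸ (hc.chainNode_iff (Nat.zero_le _) (by lia) ?_).symm⟩
    intro j _ hjx hj
    exact (hbefore j hj).not_gt hjx

lemma disconnects_image_of_subdivide (hinj : Set.InjOn Sigma.fst (F : Set (Σ e : D.E, Fin (w e))))
    (h : (subdivide D w).Disconnects F) : D.Disconnects (F.image Sigma.fst) := by
  obtain ⟨c, ⟨x, hx⟩, ⟨y, hy⟩, hc⟩ := disconnects_subdivide_iff.1 h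
  obtain ⟨u, hu⟩ := hc.exists_base hinj x
  obtain ⟨v, hv⟩ := hc.exists_base hinj y
  refine Multigraph.disconnects_iff_exists_coloring.2
    ⟨fun u => c (.inl (Quot.mk _ u)), ⟨u, hu.1 hx⟩, ⟨v, mt hv.2 hy⟩, fun e he => ?_⟩
  have hends := hc.chainNode_iff (Nat.zero_le _) (le_refl (w e)) fun _ _ _ hi =>
    he (mem_image_of_mem _ hi)
  rwa [chainNode_zero, chainNode_last] at hends

lemma not_disconnects_subdivide_iff : ¬ (subdivide D w).Disconnects F ↔
    Set.InjOn Sigma.fst (F : Set (Σ e : D.E, Fin (w e))) ∧ ¬ D.Disconnects (F.image Sigma.fst) := by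
  refine ⟨fun h => ⟨?_, mt disconnects_subdivide_of_image h⟩,
    fun ⟨hinj, h⟩ => mt (disconnects_image_of_subdivide hinj) h⟩
  rintro ⟨e, i⟩ hi ⟨_, j⟩ hj rfl
  rcases lt_trichotomy i j with hij | rfl | hij
  · exact absurd (disconnects_subdivide_of_two_mem_chain hij hi hj) h
  · rfl
  · exact absurd (disconnects_subdivide_of_two_mem_chain hij hj hi) h

lemma card_transversals {ι : Type*} [Fintype ι] (w : ι → ℕ) (T : Finset ι) :
    #(univ.filter fun F : Finset (Σ e, Fin (w e)) =>
      Set.InjOn Sigma.fst (F : Set (Σ e, Fin (w e))) ∧ F.image Sigma.fst = T) = ∏ e ∈ T, w e := by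
  have hpi : #(T.pi fun e => (univ : Finset (Fin (w e)))) = ∏ e ∈ T, w e := by
    simp only [card_pi, card_univ, Fintype.card_fin]
  rw [← hpi]
  symm
  refine card_bij (fun f _ => T.attach.image fun e => ⟨e.1, f e.1 e.2⟩) ?_ ?_ ?_
  · intro f _
    refine mem_filter.2 ⟨mem_univ _, ?_, by simp [image_image, Function.comp_def]⟩
    rw [coe_image]
    rintro _ ⟨x, -, rfl⟩ _ ⟨y, -, rfl⟩ hxy
    rw [Subtype.ext hxy]
  · intro f _ g _ hfg
    funext e he
    have hmem : (⟨e, f e he⟩ : Σ e, Fin (w e)) ∈ T.attach.image fun e => ⟨e.1, g e.1 e.2⟩ :=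
      hfg ▸ mem_image.2 ⟨⟨e, he⟩, mem_attach _ _, rfl⟩
    obtain ⟨⟨e', he'⟩, -, heq⟩ := mem_image.1 hmem
    obtain ⟨rfl, heq⟩ := Sigma.mk.inj heq
    exact (eq_of_heq heq).symm
  · intro F hF
    obtain ⟨-, hinj, rfl⟩ := mem_filter.1 hF
    have hlift : ∀ e ∈ F.image Sigma.fst, ∃ i : Fin (w e), (⟨e, i⟩ : Σ e, Fin (w e)) ∈ F := by
      rintro _ he
      obtain ⟨⟨e, i⟩, hi, rfl⟩ := mem_image.1 he
      exact ⟨i, hi⟩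
    choose g hg using hlift
    refine ⟨g, by simp, Subset.antisymm (image_subset_iff.2 fun e _ => hg e e.2) fun x hx => ?_⟩
    have hx' := mem_image_of_mem Sigma.fst hx
    exact mem_image.2 ⟨⟨x.1, hx'⟩, mem_attach _ _, hinj (hg _ hx') hx rfl⟩

lemma card_not_disconnects_subdivide (i : ℕ) :
    #(univ.filter fun F : Finset (Σ e : D.E, Fin (w e)) =>
      #F = i ∧ ¬ (subdivide D w).Disconnects F) =
      ∑ T ∈ powersetCard i univ with ¬ D.Disconnects T, ∏ e ∈ T, w e := by
  rw [card_eq_sum_card_fiberwise (f := image Sigma.fst)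
    (t := (powersetCard i univ).filter fun T => ¬ D.Disconnects T)]
  · refine sum_congr rfl fun T hT => ?_
    obtain ⟨hTcard, hT⟩ : #T = i ∧ ¬ D.Disconnects T := by simpa using hT
    rw [← card_transversals, filter_filter]
    refine congrArg card (filter_congr fun F _ => ?_)
    rw [not_disconnects_subdivide_iff]
    constructor
    · rintro ⟨⟨-, hinj, -⟩, himage⟩
      exact ⟨hinj, himage⟩
    · rintro ⟨hinj, rfl⟩
      exact ⟨⟨(card_image_of_injOn hinj).symm.trans hTcard, hinj, hT⟩, rfl⟩
  · intro F hF
    obtain ⟨hcard, hF⟩ : #F = i ∧ ¬ (subdivide D w).Disconnects F := by simpa using hF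
    obtain ⟨hinj, hF⟩ := not_disconnects_subdivide_iff.1 hF
    simpa [card_image_of_injOn hinj, hcard] using hF

theorem d_subdivide_add (i : ℕ) :
    (subdivide D w).d i + ∑ T ∈ powersetCard i univ with ¬ D.Disconnects T, ∏ e ∈ T, w e =
      (∑ e, w e).choose i := by
  have hcardE : Fintype.card (subdivide D w).E = ∑ e, w e := by
    refine Fintype.card_sigma.trans ?_
    simp only [Fintype.card_fin]
  rw [← hcardE, ← (subdivide D w).d_add_card_not_disconnects, ← card_not_disconnects_subdivide]
  congr 1
  refine card_equiv (Equiv.refl (Finset (subdivide D w).E)) fun F => ?_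
  simp only [mem_filter, mem_univ, true_and]
  rfl

theorem d_three_subdivide_add (hcard : ∀ u, #(D.star u) = 3) (hinj : Function.Injective D.star)
    (hdisc : ∀ T, #T = 3 → (D.Disconnects T ↔ ∃ u, T = D.star u)) :
    (subdivide D w).d 3 + ∑ T ∈ powersetCard 3 univ, ∏ e ∈ T, w e =
      (∑ e, w e).choose 3 + ∑ u, ∏ e ∈ D.star u, w e := by
  have hstars : (powersetCard 3 univ).filter D.Disconnects = univ.image D.star := by
    ext T
    simp only [mem_filter, mem_powersetCard, subset_univ, true_and, mem_image, mem_univ]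
    constructor
    · rintro ⟨hT, hdiscT⟩
      exact ((hdisc T hT).1 hdiscT).imp fun _ => Eq.symm
    · rintro ⟨u, rfl⟩
      exact ⟨hcard u, (hdisc _ (hcard u)).2 ⟨u, rfl⟩⟩
  rw [← sum_filter_add_sum_filter_not _ D.Disconnects, hstars, sum_image fun u _ v _ h => hinj h,
    ← d_subdivide_add]
  ring

end Subdivide

/-! ### Three-edge-connected cubic graphs -/

section MemDk

variable {k : ℕ} {D : Multigraph}

lemma memDk.card_verts_and_card_edges (hD : memDk k D) :
    Fintype.card D.V = 2 * k ∧ Fintype.card D.E = 3 * k := by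
  obtain ⟨-, hcub, -, hex⟩ := hD
  have := Multigraph.three_mul_card_verts hcub
  rw [Multigraph.nE, Multigraph.nV] at hex
  lia

lemma memDk.bridgeless (hD : memDk k D) : D.Bridgeless := fun e he => by
  have := hD.2.2.1 {e} he
  simp at this

lemma memDk.loopless (hD : memDk k D) : D.Loopless := hD.bridgeless.loopless hD.2.1

lemma memDk.card_star (hD : memDk k D) (u : D.V) : #(D.star u) = 3 :=
  (hD.loopless.card_star u).trans (hD.2.1 u)

lemma memDk.three_le_card_cutEdges (hD : memDk k D) {A : Finset D.V} (hne : A.Nonempty)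
    (huniv : A ≠ univ) : 3 ≤ #(D.cutEdges A) :=
  hD.2.2.1 _ (Multigraph.disconnects_cutEdges hne huniv)

lemma memDk.isBond_of_disconnects (hD : memDk k D) {T : Finset D.E} (hT : #T = 3)
    (hdisc : D.Disconnects T) : D.IsBond T := by
  obtain ⟨A, hne, huniv, hAT⟩ := Multigraph.disconnects_iff_exists_cutEdges_subset.1 hdisc
  refine ⟨⟨A, hne, huniv, ?_⟩, ?_⟩
  · exact (eq_of_subset_of_card_le hAT (hT ▸ hD.three_le_card_cutEdges hne huniv)).symm
  · rintro _ hBT ⟨B, hBne, hBuniv, rfl⟩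
    exact eq_of_subset_of_card_le hBT (hT ▸ hD.three_le_card_cutEdges hBne hBuniv)

lemma ne_univ_of_card_lt {α : Type*} [Fintype α] {A : Finset α} (h : #A < Fintype.card α) :
    A ≠ univ := by
  rintro rfl
  exact h.ne card_univ

lemma memDk.disconnects_iff_eq_star (hD : memDk k D) (hk : 2 ≤ k)
    (htriv : OnlyTrivialThreeBonds D) {T : Finset D.E} (hT : #T = 3) :
    D.Disconnects T ↔ ∃ u, T = D.star u := by
  refine ⟨fun hdisc => htriv T (hD.isBond_of_disconnects hT hdisc) hT, ?_⟩
  rintro ⟨u, rfl⟩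
  rw [← hD.loopless.cutEdges_singleton]
  refine Multigraph.disconnects_cutEdges (singleton_nonempty u) (ne_univ_of_card_lt ?_)
  rw [card_singleton, hD.card_verts_and_card_edges.1]
  lia

lemma memDk.star_injective (hD : memDk k D) (hk : 2 ≤ k) : Function.Injective D.star := by
  intro u v huv
  by_contra hne
  have hcut : D.cutEdges {u, v} = ∅ := by
    refine eq_empty_of_forall_notMem fun e he => ?_
    have hiff : e ∈ D.star u ↔ e ∈ D.star v := by rw [huv]
    simp only [Multigraph.mem_star] at hiff
    simp only [Multigraph.cutEdges, mem_filter, mem_univ, true_and, mem_insert,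
      mem_singleton] at he
    grind
  have := hD.three_le_card_cutEdges (insert_nonempty u {v}) (ne_univ_of_card_lt (by
    rw [card_pair hne, hD.card_verts_and_card_edges.1]
    lia))
  simp [hcut] at this

lemma memDk.degIn_le_three (hD : memDk k D) (H : Finset D.E) (u : D.V) : degIn D H u ≤ 3 :=
  (Multigraph.degIn_mono (subset_univ H) u).trans (hD.2.1 u).le

end MemDk

/-! ### Balanced weightings -/

section Balanced

variable {ι : Type} {b : ℕ} {H H' : Finset ι}

/-- The weighting with value `b + 1` on `H` and `b` elsewhere. -/
def twoLevel (b : ℕ) (H : Finset ι) (e : ι) : ℕ := if e ∈ H then b + 1 else b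

lemma balancedWeights_twoLevel : BalancedWeights (twoLevel b H) := by
  intro e f
  simp only [twoLevel]
  split_ifs <;> lia

lemma prod_twoLevel (s : Finset ι) :
    ∏ e ∈ s, twoLevel b H e = b ^ #(s \ H) * (b + 1) ^ #(s ∩ H) := by
  simp only [twoLevel, prod_ite, prod_const, filter_mem_eq_inter, filter_notMem_eq_sdiff, mul_comm]

lemma BalancedWeights.exists_le [Finite ι] {v : ι → ℕ} (hv : BalancedWeights v) {c : ℕ}
    (hc : ∀ i, v i ≤ c + 1) : ∃ a ≤ c, ∀ i, v i = a ∨ v i = a + 1 := by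
  cases isEmpty_or_nonempty ι
  · exact ⟨c, le_rfl, isEmptyElim⟩
  obtain ⟨i₀, hi₀⟩ := Finite.exists_min v
  refine ⟨min (v i₀) c, min_le_right _ _, fun i => ?_⟩
  have := hi₀ i
  have := hv i i₀
  have := hc i
  lia

variable [Fintype ι]

lemma BalancedWeights.le_of_mul_card_le_sum {v : ι → ℕ} (hv : BalancedWeights v) {c : ℕ}
    (hc : c * Fintype.card ι ≤ ∑ i, v i) (i : ι) : c ≤ v i := by
  by_contra! hi
  have hlt : ∑ j, v j < ∑ _j : ι, c := sum_lt_sum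
    (fun j _ => (hv j i).trans hi) ⟨i, mem_univ i, hi⟩
  rw [sum_const, card_univ, smul_eq_mul, mul_comm] at hlt
  lia

lemma sum_twoLevel : ∑ e, twoLevel b H e = b * Fintype.card ι + #H := by
  have : ∀ e, twoLevel b H e = b + if e ∈ H then 1 else 0 := fun e => by
    simp only [twoLevel]
    split_ifs <;> rfl
  simp only [this, sum_add_distrib, sum_const, card_univ, smul_eq_mul, sum_boole,
    filter_mem_eq_inter, univ_inter, Nat.cast_id, mul_comm]

lemma BalancedWeights.exists_eq_twoLevel [Nonempty ι] {w : ι → ℕ} (hw : BalancedWeights w) :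
    ∃ H, #H = (∑ e, w e) % Fintype.card ι ∧ w = twoLevel ((∑ e, w e) / Fintype.card ι) H := by
  obtain ⟨e₀, he₀⟩ := Finite.exists_min w
  have hwH : w = twoLevel (w e₀) (univ.filter fun e => w e = w e₀ + 1) := by
    funext e
    have := he₀ e
    have := hw e e₀
    simp only [twoLevel, mem_filter, mem_univ, true_and]
    split_ifs <;> lia
  set H := univ.filter fun e => w e = w e₀ + 1 with hH
  have hlt : #H < Fintype.card ι := (card_lt_iff_ne_univ H).2 fun h => by
    have : e₀ ∈ H := h ▸ mem_univ e₀
    simp [hH] at this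
  have hsum : ∑ e, w e = w e₀ * Fintype.card ι + #H :=
    (sum_congr rfl fun e _ => congrFun hwH e).trans sum_twoLevel
  refine ⟨H, ?_, ?_⟩
  · rw [hsum, Nat.mul_comm, Nat.mul_add_mod, Nat.mod_eq_of_lt hlt]
  · rwa [hsum, Nat.mul_comm, Nat.mul_add_div Fintype.card_pos, Nat.div_eq_of_lt hlt, add_zero]

lemma map_twoLevel : univ.val.map (twoLevel b H) =
    Multiset.replicate #H (b + 1) + Multiset.replicate (Fintype.card ι - #H) b := by
  have hval : (univ : Finset ι).val = H.val + Hᶜ.val := by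
    rw [← disjUnion_val H Hᶜ disjoint_compl_right, disjUnion_eq_union, union_compl]
  have hmem : ∀ e ∈ H.val, twoLevel b H e = b + 1 := fun e he => if_pos he
  have hnotMem : ∀ e ∈ Hᶜ.val, twoLevel b H e = b := fun e he => if_neg (mem_compl.1 he)
  rw [hval, Multiset.map_add, Multiset.map_congr rfl hmem, Multiset.map_congr rfl hnotMem,
    Multiset.map_const', Multiset.map_const', card_val, card_val, card_compl]

lemma sum_powersetCard_prod_twoLevel_congr (h : #H = #H') (n : ℕ) :
    ∑ T ∈ powersetCard n univ, ∏ e ∈ T, twoLevel b H e =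
      ∑ T ∈ powersetCard n univ, ∏ e ∈ T, twoLevel b H' e := by
  rw [← esymm_map_val, ← esymm_map_val, map_twoLevel, map_twoLevel, h]

end Balanced

section PiV

variable {D : Multigraph} {b : ℕ} {H : Finset D.E}

lemma incCount_eq_degIn {w : D.E → ℕ} (u : D.V) (c : ℕ) :
    incCount D w u c = degIn D (univ.filter fun e => w e = c) u := by
  simp only [incCount, degIn, filter_filter, and_comm]

lemma incCount_twoLevel_succ (u : D.V) : incCount D (twoLevel b H) u (b + 1) = degIn D H u := by
  rw [incCount_eq_degIn]
  congr 1
  ext e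
  simp [twoLevel]

lemma incCount_twoLevel_self (u : D.V) : incCount D (twoLevel b H) u b = degIn D Hᶜ u := by
  rw [incCount_eq_degIn]
  congr 1
  ext e
  simp [twoLevel]

lemma incCount_twoLevel_of_ne (u : D.V) {c : ℕ} (h₀ : c ≠ b) (h₁ : c ≠ b + 1) :
    incCount D (twoLevel b H) u c = 0 := by
  have : ∀ e, twoLevel b H e ≠ c := fun e => by
    simp only [twoLevel]
    split_ifs
    exacts [h₁.symm, h₀.symm]
  simp [incCount, this]

lemma piV_twoLevel_self (u : D.V) : piV D (twoLevel b H) b u = degIn D H u := by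
  rw [piV, incCount_twoLevel_succ]
  split_ifs
  · exact sub_zero _
  · rw [incCount_twoLevel_of_ne u (by lia) (by lia), Nat.cast_zero, sub_zero]

lemma piV_twoLevel_succ (u : D.V) : piV D (twoLevel b H) (b + 1) u = -degIn D Hᶜ u := by
  rw [piV, incCount_twoLevel_of_ne u (by lia) (by lia), if_neg b.succ_ne_zero,
    Nat.add_sub_cancel, incCount_twoLevel_self, Nat.cast_zero, zero_sub]

lemma stdWeight_eq_or {k : ℕ} (hk : 0 < k) (m : ℕ) :
    stdWeight m k = m / (3 * k) ∨ stdWeight m k = m / (3 * k) + 1 := by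
  have hle : m / (3 * k) ≤ stdWeight m k := by
    rw [stdWeight, Nat.le_div_iff_mul_le (by lia)]
    have := Nat.div_mul_le_self m (3 * k)
    lia
  have hlt : stdWeight m k < m / (3 * k) + 2 := by
    rw [stdWeight, Nat.div_lt_iff_lt_mul (by lia)]
    have := Nat.lt_div_mul_add (a := m) (b := 3 * k) (by lia)
    lia
  lia

lemma balancedPiV_twoLevel_iff (hcub : ∀ v, D.deg v = 3) {q : ℕ} (hq : q = b ∨ q = b + 1) :
    BalancedPiV D (twoLevel b H) q ↔ BalancedWeights (degIn D H) := by
  rcases hq with rfl | rfl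
  · simp only [BalancedPiV, BalancedWeights, piV_twoLevel_self]
    exact_mod_cast Iff.rfl
  · have hcompl : ∀ u, (degIn D Hᶜ u : ℤ) = 3 - degIn D H u := fun u => by
      have := Multigraph.degIn_compl_add H u
      have := hcub u
      lia
    simp only [BalancedPiV, BalancedWeights, piV_twoLevel_succ, hcompl]
    exact forall₂_congr fun u v => by lia

end PiV

/-! ### Convexity -/

/-- The line through `(a, φ a)` and `(a + 1, φ (a + 1))`, evaluated at `h`. -/
def secantLine (φ : ℕ → ℕ) (a h : ℕ) : ℤ := φ a + ((h : ℤ) - a) * ((φ (a + 1) : ℤ) - φ a)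

section Secant

variable {φ : ℕ → ℕ} {a h : ℕ}

lemma secantLine_of_eq_or (hh : h = a ∨ h = a + 1) : secantLine φ a h = φ h := by
  rcases hh with rfl | rfl <;> simp [secantLine]

variable {ι : Type*} [Fintype ι] {v v' : ι → ℕ}

lemma sum_secantLine_congr (hsum : ∑ i, v i = ∑ i, v' i) :
    ∑ i, secantLine φ a (v i) = ∑ i, secantLine φ a (v' i) := by
  have hsum' : ∑ i, (v i : ℤ) = ∑ i, (v' i : ℤ) := mod_cast hsum
  simp only [secantLine, sum_add_distrib, ← sum_mul, sum_sub_distrib, hsum']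

lemma sum_eq_sum_secantLine (hv : ∀ i, v i = a ∨ v i = a + 1) (hsum : ∑ i, v i = ∑ i, v' i) :
    ((∑ i, φ (v i) : ℕ) : ℤ) = ∑ i, secantLine φ a (v' i) := by
  rw [← sum_secantLine_congr hsum, Nat.cast_sum]
  exact sum_congr rfl fun i _ => (secantLine_of_eq_or (hv i)).symm

lemma sum_le_sum_of_secantLine_le (hv : ∀ i, v i = a ∨ v i = a + 1)
    (hsum : ∑ i, v i = ∑ i, v' i) (hle : ∀ i, secantLine φ a (v' i) ≤ φ (v' i)) :
    ∑ i, φ (v i) ≤ ∑ i, φ (v' i) := by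
  have := sum_le_sum fun i (_ : i ∈ univ) => hle i
  rw [← sum_eq_sum_secantLine hv hsum] at this
  exact_mod_cast this

lemma eq_or_of_sum_le_sum_of_secantLine_lt (hv : ∀ i, v i = a ∨ v i = a + 1)
    (hsum : ∑ i, v i = ∑ i, v' i)
    (hlt : ∀ i, v' i ≠ a → v' i ≠ a + 1 → secantLine φ a (v' i) < φ (v' i))
    (hle : ∑ i, φ (v' i) ≤ ∑ i, φ (v i)) (i : ι) : v' i = a ∨ v' i = a + 1 := by
  by_contra! hi
  have hsec : ∀ j, secantLine φ a (v' j) ≤ φ (v' j) := fun j => by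
    by_cases hj : v' j = a ∨ v' j = a + 1
    · exact (secantLine_of_eq_or hj).le
    · push Not at hj
      exact (hlt j hj.1 hj.2).le
  have := sum_lt_sum (fun j _ => hsec j) ⟨i, mem_univ i, hlt i hi.1 hi.2⟩
  rw [← sum_eq_sum_secantLine hv hsum] at this
  exact hle.not_gt (mod_cast this)

end Secant

/-- The product of the weights of the three edges at a vertex of a cubic graph, `h` of which
have weight `b + 1` and the others weight `b`. Only meaningful for `h ≤ 3`. -/
def starWeight (b h : ℕ) : ℕ := b ^ (3 - h) * (b + 1) ^ h

-- The gap is `0` for `h = a` and `h = a + 1`, and otherwise `b`, `b + 1`, `3 * b + 1` or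
-- `3 * b + 2`.
lemma secantLine_starWeight_le {b a h : ℕ} (ha : a ≤ 2) (hh : h ≤ 3) :
    secantLine (starWeight b) a h ≤ starWeight b h := by
  unfold secantLine starWeight
  interval_cases a <;> interval_cases h <;> lia

lemma secantLine_starWeight_lt {b a h : ℕ} (ha : a ≤ 2) (hh : h ≤ 3) (hba : b ≠ 0 ∨ a = 2)
    (hne : h ≠ a) (hne' : h ≠ a + 1) : secantLine (starWeight b) a h < starWeight b h := by
  unfold secantLine starWeight
  interval_cases a <;> interval_cases h <;> lia

/-! ### Minimizing `d 3` -/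

section Minimizers

variable {k : ℕ} {D : Multigraph} {b : ℕ} {H H' : Finset D.E}

lemma memDk.prod_star_twoLevel (hD : memDk k D) (u : D.V) :
    ∏ e ∈ D.star u, twoLevel b H e = starWeight b (degIn D H u) := by
  have hsdiff : #(D.star u \ H) = 3 - #(D.star u ∩ H) := by
    have := card_sdiff_add_card_inter (D.star u) H
    have := hD.card_star u
    lia
  rw [prod_twoLevel, starWeight, Multigraph.degIn_eq_card_star_inter fun e _ => hD.loopless e,
    hsdiff]

lemma memDk.d_three_twoLevel_le_iff (hD : memDk k D) (hk : 2 ≤ k)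
    (htriv : OnlyTrivialThreeBonds D) (hcard : #H = #H') :
    (subdivide D (twoLevel b H)).d 3 ≤ (subdivide D (twoLevel b H')).d 3 ↔
      ∑ u, starWeight b (degIn D H u) ≤ ∑ u, starWeight b (degIn D H' u) := by
  have hd (S : Finset D.E) := d_three_subdivide_add (w := twoLevel b S) hD.card_star
    (hD.star_injective hk) fun T => hD.disconnects_iff_eq_star hk htriv
  have hH := hd H
  have hH' := hd H'
  rw [sum_powersetCard_prod_twoLevel_congr hcard, sum_twoLevel, hcard] at hH
  rw [sum_twoLevel] at hH'
  simp only [hD.prod_star_twoLevel] at hH hH'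
  lia

lemma sum_degIn_congr (hcard : #H = #H') : ∑ u, degIn D H u = ∑ u, degIn D H' u := by
  rw [Multigraph.sum_degIn, Multigraph.sum_degIn, hcard]

theorem memDk.d_three_le_of_balanced (hD : memDk k D) (hk : 2 ≤ k)
    (htriv : OnlyTrivialThreeBonds D) (hcard : #H = #H') (hH : BalancedWeights (degIn D H)) :
    (subdivide D (twoLevel b H)).d 3 ≤ (subdivide D (twoLevel b H')).d 3 := by
  obtain ⟨a, ha, hval⟩ := hH.exists_le (hD.degIn_le_three H)
  exact (hD.d_three_twoLevel_le_iff hk htriv hcard).2 <|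
    sum_le_sum_of_secantLine_le hval (sum_degIn_congr hcard) fun u =>
      secantLine_starWeight_le ha (hD.degIn_le_three H' u)

lemma memDk.two_le_degIn (hD : memDk k D) (hcard : 2 * k ≤ #H)
    (hH : BalancedWeights (degIn D H)) (u : D.V) : 2 ≤ degIn D H u := by
  refine hH.le_of_mul_card_le_sum ?_ u
  rw [Multigraph.sum_degIn, hD.card_verts_and_card_edges.1]
  lia

theorem memDk.balanced_of_d_three_le (hD : memDk k D) (hk : 2 ≤ k)
    (htriv : OnlyTrivialThreeBonds D) (hcard : #H = #H') (hb : b = 0 → 2 * k ≤ #H)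
    (hH : BalancedWeights (degIn D H))
    (hle : (subdivide D (twoLevel b H')).d 3 ≤ (subdivide D (twoLevel b H)).d 3) :
    BalancedWeights (degIn D H') := by
  obtain ⟨a, ha, hval, hba⟩ :
      ∃ a ≤ 2, (∀ u, degIn D H u = a ∨ degIn D H u = a + 1) ∧ (b ≠ 0 ∨ a = 2) := by
    by_cases hb0 : b = 0
    · refine ⟨2, le_rfl, fun u => ?_, .inr rfl⟩
      have := hD.two_le_degIn (hb hb0) hH u
      have := hD.degIn_le_three H u
      lia
    · obtain ⟨a, ha, hval⟩ := hH.exists_le (hD.degIn_le_three H)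
      exact ⟨a, ha, hval, .inl hb0⟩
  have hval' := eq_or_of_sum_le_sum_of_secantLine_lt hval (sum_degIn_congr hcard)
    (fun u => secantLine_starWeight_lt ha (hD.degIn_le_three H' u) hba)
    ((hD.d_three_twoLevel_le_iff hk htriv hcard.symm).1 hle)
  intro u v
  have := hval' u
  have := hval' v
  lia

lemma memDk.exists_balanced_zeroAcyclic (hD : memDk k D) {s : ℕ} (hs : s ≤ 3 * k)
    (hb : b = 0 → 2 * k ≤ s) :
    ∃ H, #H = s ∧ BalancedWeights (degIn D H) ∧ ZeroAcyclic D (twoLevel b H) := by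
  obtain ⟨H, hcard, hH⟩ :=
    hD.bridgeless.exists_equitable hD.2.1 (hs.trans hD.card_verts_and_card_edges.2.ge)
  refine ⟨H, hcard, hH, zeroAcyclic_of_isMatchingIn fun u => ?_⟩
  by_cases hb0 : b = 0
  · have hzero : (univ.filter fun e => twoLevel b H e = 0) = Hᶜ := by
      ext e
      simp [twoLevel, hb0]
    have := Multigraph.degIn_compl_add H u
    have := hD.2.1 u
    have := hD.two_le_degIn (hcard ▸ hb hb0) hH u
    rw [hzero]
    lia
  · have hzero : (univ.filter fun e => twoLevel b H e = 0) = ∅ := by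
      refine filter_eq_empty_iff.2 fun e _ => ?_
      simp only [twoLevel]
      split_ifs <;> lia
    simp [hzero, degIn]

lemma memDk.exists_eq_twoLevel (hD : memDk k D) (hk : 0 < k) {m : ℕ} {w : D.E → ℕ}
    (hsum : ∑ e, w e = m) (hw : BalancedWeights w) :
    ∃ H, #H = m % (3 * k) ∧ w = twoLevel (m / (3 * k)) H := by
  have : Nonempty D.E := Fintype.card_pos_iff.1 (by rw [hD.card_verts_and_card_edges.2]; lia)
  simpa only [hD.card_verts_and_card_edges.2, hsum] using hw.exists_eq_twoLevel

end Minimizers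

theorem d3_min_in_Bm_general (k m : ℕ) (hk : 2 ≤ k) (D : Multigraph) (hD : memDk k D)
    (htriv : OnlyTrivialThreeBonds D) (w : D.E → ℕ) (hsum : ∑ e, w e = m)
    (hw : BalancedWeights w) :
    (BalancedPiV D w (stdWeight m k) →
      ∀ w' : D.E → ℕ, ∑ e, w' e = m → BalancedWeights w' →
        (subdivide D w).d 3 ≤ (subdivide D w').d 3) ∧
    (2 * k ≤ m →
      (∀ w' : D.E → ℕ, IsBalancedWeighting D w' m →
        (subdivide D w).d 3 ≤ (subdivide D w').d 3) →
      BalancedPiV D w (stdWeight m k)) := by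
  obtain ⟨H, hH, rfl⟩ := hD.exists_eq_twoLevel (by lia) hsum hw
  rw [balancedPiV_twoLevel_iff hD.2.1 (stdWeight_eq_or (by lia) m)]
  refine ⟨fun hbal w' hsum' hw' => ?_, fun h2k hmin => ?_⟩
  · obtain ⟨H', hH', rfl⟩ := hD.exists_eq_twoLevel (by lia) hsum' hw'
    exact hD.d_three_le_of_balanced hk htriv (hH.trans hH'.symm) hbal
  · have hb : m / (3 * k) = 0 → 2 * k ≤ m % (3 * k) := fun hb => by
      rwa [Nat.mod_eq_of_lt (Nat.lt_of_div_eq_zero (by lia) hb)]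
    obtain ⟨H', hH', hbal, hacyc⟩ :=
      hD.exists_balanced_zeroAcyclic (Nat.mod_lt m (by lia)).le hb
    have hsum' : ∑ e, twoLevel (m / (3 * k)) H' e = m := by
      rw [sum_twoLevel, hD.card_verts_and_card_edges.2, hH', Nat.div_add_mod']
    exact hD.balanced_of_d_three_le hk htriv (hH'.trans hH.symm) (hH'.symm ▸ hb) hbal
      (hmin _ ⟨hsum', balancedWeights_twoLevel, hacyc⟩)

/-- let m > k ≥ 2, D ∈ 𝒟_k with only trivial 3-bonds, and w a balanced
weighting of D of total size m with implied graph G ∈ ℬ_m(D). (a) If the π^v-values of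
D are balanced then G minimizes d₃ within ℬ_m(D); (b) if moreover m ≥ 2k, then G
minimizes d₃ within ℬ_m(D) iff the π^v-values are balanced. -/
theorem d3_min_in_Bm (k m : ℕ) (hk : 2 ≤ k) (hm : k < m)
    (D : Multigraph) (hD : memDk k D) (htriv : OnlyTrivialThreeBonds D)
    (w : D.E → ℕ) (hw : IsBalancedWeighting D w m) :
    (BalancedPiV D w (stdWeight m k) →
      ∀ w' : D.E → ℕ, IsBalancedWeighting D w' m →
        (subdivide D w).d 3 ≤ (subdivide D w').d 3) ∧
    (2 * k ≤ m →
      ((∀ w' : D.E → ℕ, IsBalancedWeighting D w' m →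
          (subdivide D w).d 3 ≤ (subdivide D w').d 3) ↔
        BalancedPiV D w (stdWeight m k))) := by
  obtain ⟨hmin, hconv⟩ := d3_min_in_Bm_general k m hk D hD htriv w hw.1 hw.2.1
  exact ⟨fun hbal w' hw' => hmin hbal w' hw'.1 hw'.2.1,
    fun h2k => ⟨hconv h2k, fun hbal w' hw' => hmin hbal w' hw'.1 hw'.2.1⟩⟩
end
end
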